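/- Let $(A, \mathfrak{m})$ be a Cohen-Macaulay local ring of dimension $d > 0$ with infinite residue field, $I$ an $\mathfrak{m}$-primary ideal, $Q$ a minimal reduction of $I$, and suppose $e_1(I) = e_0(I) - \ell_A(A/I) + 1$. Set $c = \ell_A(I^2/QI)$. Then $0 < c \leq d$, and if $c < d$ then for all $n \geq 0$, $\ell_A(A/I^{n+1}) = e_0\binom{n+d}{d} - e_1\binom{n+d-1}{d-1} + \binom{n+d-c-1}{d-c-1}$; consequently $e_{c+1}(I) = (-1)^{c+1}$ and $e_i(I) = 0$ for $2 \leq i \leq d$, $i \neq c+1$. -/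

import Mathlib

open IsLocalRing

/-- A Noetherian local ring is Cohen–Macaulay of dimension `d` iff its Krull dimension
is `d` and there is a regular sequence of length `d` in the maximal ideal. -/
def IsCohenMacaulayLocal (A : Type*) [CommRing A] [IsLocalRing A] (d : ℕ) : Prop :=
  ringKrullDim A = d ∧
    ∃ rs : List A, rs.length = d ∧ (∀ x ∈ rs, x ∈ maximalIdeal A) ∧
      RingTheory.Sequence.IsRegular A rs

/-- `I` is primary to the maximal ideal (i.e. `𝔪`-primary). -/
def IsPrimaryToMax (A : Type*) [CommRing A] [IsLocalRing A] (I : Ideal A) : Prop :=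
  I ≤ maximalIdeal A ∧ maximalIdeal A ≤ I.radical

/-- The length of a module, as the Krull dimension of its submodule lattice. -/
noncomputable def moduleLength (A M : Type*) [CommRing A] [AddCommGroup M]
    [Module A M] : WithBot ℕ∞ :=
  Order.krullDim (Submodule A M)

/-!
The leading forms of the generators of `Q` behave like variables over `A ⧸ Q`, so that `ℓ(A/IQⁿ)`
is an explicit polynomial in `n`, and `e₁ = e₀ - ℓ(A/I) + 1` says that `ℓ(A/IQⁿ) - ℓ(A/Iⁿ⁺¹)` is
`C(n+d-1, d-1)` up to lower order: the Sally module `⨁ Iⁿ⁺¹/IQⁿ` has rank one over the polynomial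
ring of forms over the residue field. Choose `w ∈ I²` representing a socle element of `I²/IQ`. Any
`y ∈ Iⁱ⁺²` satisfies `F(a) y ≡ G(a) w` for some forms `F` and `G`, which unique factorization of
forms, lifted from the residue field to `𝔪`-primary ideals, allows one to reduce to lowest terms.

If `F` is always a unit, the Sally module is free on `w` and `c = 1`. Otherwise some `z ∉ I` with
`𝔪 z ⊆ I` satisfies `I² = IQ + z L`, where `𝔪Q ⊆ L ⊆ Q`, and the Sally module is `z` times the ideal
generated by `c` independent linear forms, of Hilbert function
`C(n+d-1, d-1) - C(n+d-c-1, d-c-1)`.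
-/

section RegularSequences

open RingTheory.Sequence
open scoped Pointwise

universe u v

lemma annihilator_sup_span_le_annihilator_quotSMulTop {A : Type*} (M : Type*) [CommRing A]
    [AddCommGroup M] [Module A M] (x : A) :
    Module.annihilator A M ⊔ Ideal.span {x} ≤ Module.annihilator A (QuotSMulTop x M) :=
  sup_le (LinearMap.annihilator_le_of_surjective _ (Submodule.mkQ_surjective _))
    ((Ideal.span_singleton_le_iff_mem _).2 (QuotSMulTop.mem_annihilator M x))

variable {A : Type u} [CommRing A] [IsNoetherianRing A] {M : Type v} [AddCommGroup M] [Module A M]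
  [Module.Finite A M]

lemma exists_mem_associatedPrimes_quotSMulTop {x : A} (hx : x ∈ (⊥ : Ideal A).jacobson)
    (hreg : IsSMulRegular M x) {P : Ideal A} (hP : P ∈ associatedPrimes A M) :
    ∃ P' ∈ associatedPrimes A (QuotSMulTop x M), P ≤ P' ∧ x ∈ P' := by
  obtain ⟨hprime, u, hu⟩ := isAssociatedPrime_iff.1 hP
  let N := Submodule.torsionBySet A M P
  have mem_N : ∀ v, v ∈ N ↔ ∀ p ∈ P, p • v = 0 := fun v => by
    rw [Submodule.mem_torsionBySet_iff]
    exact ⟨fun h p hp => h ⟨p, hp⟩, fun h p => h p p.2⟩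
  have huN : u ∈ N := (mem_N u).2 fun p hp => by
    rwa [hu, Submodule.mem_colon_singleton, Submodule.mem_bot] at hp
  obtain ⟨v, hvN, hv⟩ : ∃ v ∈ N, v ∉ x • (⊤ : Submodule A M) := by
    by_contra! hN
    have hNx : N ≤ Ideal.span {x} • N := by
      intro v hv
      obtain ⟨w, -, rfl⟩ := Submodule.mem_smul_pointwise_iff_exists _ _ _ |>.1 (hN v hv)
      refine Submodule.smul_mem_smul (Ideal.mem_span_singleton_self x) ((mem_N w).2 fun p hp => ?_)
      apply hreg
      simpa only [smul_comm p x, smul_zero] using (mem_N _).1 hv p hp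
    have hN0 := Submodule.eq_bot_of_le_smul_of_le_jacobson_bot _ _ (IsNoetherian.noetherian N) hNx
      ((Ideal.span_singleton_le_iff_mem _).2 hx)
    rw [hN0, Submodule.mem_bot] at huN
    exact hprime.ne_top (by rw [hu, huN]; simp)
  obtain ⟨P', hP', hle⟩ := exists_le_isAssociatedPrime_of_isNoetherianRing A
    (Submodule.Quotient.mk v : QuotSMulTop x M) (by rwa [Ne, Submodule.Quotient.mk_eq_zero])
  have mem_P' : ∀ y, y • v ∈ x • (⊤ : Submodule A M) → y ∈ P' := fun y hy => hle <| by
    rwa [Submodule.mem_colon_singleton, Submodule.mem_bot, ← Submodule.Quotient.mk_smul,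
      Submodule.Quotient.mk_eq_zero]
  exact ⟨P', hP', fun p hp => mem_P' p (by simp only [(mem_N v).1 hvN p hp, zero_mem]),
    mem_P' x (Submodule.smul_mem_pointwise_smul _ _ _ trivial)⟩

variable [IsLocalRing A]

lemma length_le_ringKrullDim_quotient_of_isRegular {rs : List A}
    (hrs : ∀ r ∈ rs, r ∈ maximalIdeal A) (h : IsRegular M rs) {P : Ideal A}
    (hP : P ∈ associatedPrimes A M) : rs.length ≤ ringKrullDim (A ⧸ P) := by
  induction rs generalizing M P with
  | nil =>
    have := hP.isPrime
    exact ringKrullDim_nonneg_of_nontrivial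
  | cons x rs ih =>
    obtain ⟨hx, h⟩ := (isRegular_cons_iff M x rs).1 h
    rw [List.forall_mem_cons] at hrs
    obtain ⟨P', hP', hPP', hxP'⟩ := exists_mem_associatedPrimes_quotSMulTop
      (by rw [jacobson_eq_maximalIdeal _ bot_ne_top]; exact hrs.1) hx hP
    have hxP : x ∉ P := by
      have := (biUnion_associatedPrimes_eq_compl_regular A (M := M)).le
      exact fun hxP => this (Set.mem_biUnion hP hxP) hx
    have := hP.isPrime
    have hdim := ringKrullDim_succ_le_of_surjective (Ideal.Quotient.factor hPP')
      (Ideal.Quotient.factor_surjective hPP') (r := Ideal.Quotient.mk P x)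
      (mem_nonZeroDivisors_of_ne_zero (by rwa [Ne, Ideal.Quotient.eq_zero_iff_mem]))
      (by rwa [Ideal.Quotient.factor_mk, Ideal.Quotient.eq_zero_iff_mem])
    rw [List.length_cons, Nat.cast_succ]
    exact (add_le_add_left (ih hrs.2 h hP') 1).trans hdim

lemma supportDim_le_length_of_maximalIdeal_le_radical {rs : List A}
    (hrs : ∀ r ∈ rs, r ∈ maximalIdeal A)
    (h : maximalIdeal A ≤ (Module.annihilator A M ⊔ Ideal.ofList rs).radical) :
    Module.supportDim A M ≤ rs.length := by
  induction rs generalizing M with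
  | nil =>
    rw [Ideal.ofList_nil, sup_bot_eq] at h
    have hsub : Subsingleton (Module.support A M) := by
      have asIdeal_eq (p : Module.support A M) : p.1.asIdeal = maximalIdeal A := by
        have hp := p.1.2.radical_le_iff.2 (Module.annihilator_le_of_mem_support p.2)
        exact (le_maximalIdeal p.1.2.ne_top).antisymm (h.trans hp)
      exact ⟨fun p q => Subtype.ext (PrimeSpectrum.ext ((asIdeal_eq p).trans (asIdeal_eq q).symm))⟩
    exact Order.krullDim_nonpos_of_subsingleton.trans (by simp)
  | cons x rs ih =>
    rw [List.forall_mem_cons] at hrs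
    rw [Ideal.ofList_cons, ← sup_assoc] at h
    have := ih (M := QuotSMulTop x M) hrs.2
      (h.trans (Ideal.radical_mono
        (sup_le_sup_right (annihilator_sup_span_le_annihilator_quotSMulTop M x) _)))
    rw [List.length_cons, Nat.cast_succ]
    exact (Module.supportDim_le_supportDim_quotSMulTop_succ hrs.1).trans (add_le_add_left this 1)

section Rees

variable {M : Type u} [AddCommGroup M] [Module A M] [Module.Finite A M] {rs : List A}

open CategoryTheory Abelian in
-- Regular sequences of length `n + 1` mean that `Ext^i(A/𝔪, M) = 0` for `i ≤ n`, and the long exact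
-- sequence of `0 → M → M → M/xM → 0` moves this vanishing to `M/xM`, one degree lower.
lemma exists_isRegular_quotSMulTop (hrs : ∀ r ∈ rs, r ∈ maximalIdeal A) (h : IsRegular M rs)
    {n : ℕ} (hn : rs.length = n + 1) {x : A} (hx : x ∈ maximalIdeal A) (hreg : IsSMulRegular M x) :
    ∃ rs' : List A, rs'.length = n ∧ (∀ r ∈ rs', r ∈ maximalIdeal A) ∧
      IsRegular (QuotSMulTop x M) rs' := by
  have := h.nontrivial
  have := nontrivial_quotSMulTop_of_mem_maximalIdeal M hx
  have smul_top_lt (N : Type u) [AddCommGroup N] [Module A N] [Module.Finite A N] [Nontrivial N] :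
      maximalIdeal A • (⊤ : Submodule A N) < ⊤ :=
    (Submodule.top_ne_ideal_smul_of_le_jacobson_annihilator
      (maximalIdeal_le_jacobson _)).symm.lt_top
  let k := ModuleCat.of A (A ⧸ maximalIdeal A)
  have hk : Module.support A k = PrimeSpectrum.zeroLocus (maximalIdeal A) := by
    rw [Module.support_eq_zeroLocus, Ideal.annihilator_quotient]
  have hext : ∀ i < n + 1, Subsingleton (Ext k (ModuleCat.of A M) i) := fun i hi =>
    ModuleCat.subsingleton_ext_of_exists_isRegular _ k hk.subset _ (smul_top_lt M) rs hrs h i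
      (hn ▸ hi)
  refine ModuleCat.exists_isRegular_of_exists_subsingleton_ext (maximalIdeal A) n
    (ModuleCat.of A (QuotSMulTop x M)) (smul_top_lt _) k hk fun i hi => ?_
  have zero_i := AddCommGrpCat.isZero_of_iff_subsingleton.mpr (hext i (by lia))
  have zero_succ := AddCommGrpCat.isZero_of_iff_subsingleton.mpr (hext (i + 1) (by lia))
  exact AddCommGrpCat.subsingleton_of_isZero <| ShortComplex.Exact.isZero_of_both_zeros
    (Ext.covariant_sequence_exact₃' k (IsSMulRegular.smulShortComplex_shortExact
      (M := ModuleCat.of A M) hreg) i (i + 1) rfl)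
    (zero_i.eq_zero_of_src _) (zero_succ.eq_zero_of_tgt _)

lemma isWeaklyRegular_of_maximalIdeal_le_radical {as : List A}
    (hrs : ∀ r ∈ rs, r ∈ maximalIdeal A) (h : IsRegular M rs)
    (hlen : as.length = rs.length) (has : ∀ a ∈ as, a ∈ maximalIdeal A)
    (hrad : maximalIdeal A ≤ (Module.annihilator A M ⊔ Ideal.ofList as).radical) :
    IsWeaklyRegular M as := by
  induction as generalizing M rs with
  | nil => exact .nil A M
  | cons a as ih =>
    rw [List.forall_mem_cons] at has
    rw [Ideal.ofList_cons, ← sup_assoc] at hrad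
    have hreg : IsSMulRegular M a := by
      by_contra hna
      obtain ⟨P, hP, haP⟩ :=
        Set.mem_iUnion₂.1 ((biUnion_associatedPrimes_eq_compl_regular A (M := M)).ge hna)
      have hle := length_le_ringKrullDim_quotient_of_isRegular hrs h hP
      have hge := supportDim_le_length_of_maximalIdeal_le_radical (M := A ⧸ P) has.2 <|
        hrad.trans <| Ideal.radical_mono <| sup_le_sup_right (by
          rw [Ideal.annihilator_quotient, sup_le_iff, Ideal.span_singleton_le_iff_mem,
            ← Submodule.annihilator_top]
          exact ⟨hP.annihilator_le, haP⟩) _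
      rw [Module.supportDim_quotient_eq_ringKrullDim] at hge
      have := hle.trans hge
      rw [← hlen, List.length_cons, Nat.cast_le] at this
      lia
    obtain ⟨rs', hlen', hrs', h'⟩ :=
      exists_isRegular_quotSMulTop hrs h hlen.symm has.1 hreg
    refine .cons hreg (ih hrs' h' hlen'.symm has.2 (hrad.trans (Ideal.radical_mono ?_)))
    exact sup_le_sup_right (annihilator_sup_span_le_annihilator_quotSMulTop M a) _

end Rees

end RegularSequences

section HomogeneousPolynomials

open MvPolynomial

variable {A ι : Type*} [CommRing A]

lemma homogeneousComponent_mul_of_isHomogeneous {F : MvPolynomial ι A} {k : ℕ}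
    (hF : F.IsHomogeneous k) (G : MvPolynomial ι A) (n : ℕ) :
    homogeneousComponent n (F * G) = if k ≤ n then F * homogeneousComponent (n - k) G else 0 := by
  classical
  let := gradedAlgebra (σ := ι) (R := A)
  have h : ∀ (p : MvPolynomial ι A) i,
      (DirectSum.decompose (homogeneousSubmodule ι A) p i : MvPolynomial ι A) =
        homogeneousComponent i p := fun p i => decomposition.decompose'_apply p i
  rw [← h, ← h]
  exact DirectSum.coe_decompose_mul_of_left_mem (homogeneousSubmodule ι A) n hF

lemma exists_eq_X_last_mul_add_rename_castSucc {n : ℕ} (F : MvPolynomial (Fin (n + 1)) A) :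
    ∃ H G, F = X (Fin.last n) * H + rename Fin.castSucc G := by
  induction F using MvPolynomial.induction_on with
  | C r => exact ⟨0, C r, by simp⟩
  | add F₁ F₂ h₁ h₂ =>
    obtain ⟨⟨H₁, G₁, rfl⟩, H₂, G₂, rfl⟩ := And.intro h₁ h₂
    exact ⟨H₁ + H₂, G₁ + G₂, by rw [map_add]; ring⟩
  | mul_X F i h =>
    obtain ⟨H, G, rfl⟩ := h
    induction i using Fin.lastCases with
    | last => exact ⟨X (Fin.last n) * H + rename Fin.castSucc G, 0, by rw [map_zero]; ring⟩
    | cast i => exact ⟨H * X i.castSucc, G * X i, by rw [map_mul, rename_X]; ring⟩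

lemma exists_isHomogeneous_eq_X_last_mul_add_rename_castSucc {n k : ℕ}
    {F : MvPolynomial (Fin (n + 1)) A} (hF : F.IsHomogeneous (k + 1)) :
    ∃ H G, H.IsHomogeneous k ∧ G.IsHomogeneous (k + 1) ∧
      F = X (Fin.last n) * H + rename Fin.castSucc G := by
  obtain ⟨H, G, hHG⟩ := exists_eq_X_last_mul_add_rename_castSucc F
  refine ⟨homogeneousComponent k H, homogeneousComponent (k + 1) G,
    homogeneousComponent_isHomogeneous _ _, homogeneousComponent_isHomogeneous _ _, ?_⟩
  conv_lhs => rw [← homogeneousComponent_eq_self hF, hHG, map_add,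
    homogeneousComponent_mul_of_isHomogeneous (isHomogeneous_X A _), if_pos (Nat.le_add_left 1 k),
    Nat.add_sub_cancel, ← rename_homogeneousComponent]

lemma rename_mem_map_C {κ : Type*} (f : ι → κ) {K : Ideal A} {F : MvPolynomial ι A}
    (hF : F ∈ K.map C) : rename f F ∈ K.map C := by
  have := Ideal.mem_map_of_mem (rename f : MvPolynomial ι A →ₐ[A] _).toRingHom hF
  rwa [Ideal.map_map, show (rename f).toRingHom.comp C = C from
    RingHom.ext fun r => rename_C f r] at this

variable {a : ι → A}

lemma eval_mem_span_range_pow {F : MvPolynomial ι A} {n : ℕ} (hF : F.IsHomogeneous n) :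
    eval a F ∈ Ideal.span (Set.range a) ^ n :=
  Ideal.mem_span_pow_iff_exists_isHomogeneous _ _ |>.2 ⟨F, hF, rfl⟩

lemma eval_mem_mul_span_range_pow {F : MvPolynomial ι A} {n : ℕ} (hF : F.IsHomogeneous n)
    {K : Ideal A} (hK : F ∈ K.map C) : eval a F ∈ K * Ideal.span (Set.range a) ^ n := by
  rw [F.as_sum, map_sum]
  refine sum_mem fun m hm => ?_
  rw [← mul_one (coeff m F), ← C_mul_monomial, map_mul, eval_C]
  refine Ideal.mul_mem_mul (mem_map_C_iff.1 hK m) (eval_mem_span_range_pow ?_)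
  exact isHomogeneous_monomial 1 (not_imp_comm.1 hF.coeff_eq_zero (mem_support_iff.1 hm))

lemma exists_eval_eq_of_mem_mul_span_range_pow {n : ℕ} {K : Ideal A} {x : A}
    (hx : x ∈ K * Ideal.span (Set.range a) ^ n) :
    ∃ F : MvPolynomial ι A, F.IsHomogeneous n ∧ F ∈ K.map C ∧ eval a F = x := by
  induction hx using Submodule.mul_induction_on' with
  | mem_mul_mem c hc y hy =>
    obtain ⟨F, hF, rfl⟩ := Ideal.mem_span_pow_iff_exists_isHomogeneous _ _ |>.1 hy
    exact ⟨C c * F, hF.C_mul c, Ideal.mul_mem_right _ _ (Ideal.mem_map_of_mem C hc), by simp⟩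
  | add x _ y _ hx hy =>
    obtain ⟨⟨F, hF, hFK, rfl⟩, G, hG, hGK, rfl⟩ := And.intro hx hy
    exact ⟨F + G, hF.add hG, add_mem hFK hGK, map_add ..⟩

end HomogeneousPolynomials

section QuasiRegularSequences

open MvPolynomial

variable {A ι : Type*} [CommRing A]

lemma ideal_ofList_ofFn {n : ℕ} (a : Fin n → A) :
    Ideal.ofList (List.ofFn a) = Ideal.span (Set.range a) :=
  congrArg Ideal.span (Set.ext fun _ => List.mem_ofFn)

/-- The family `a` is quasi-regular: every homogeneous relation between its members has all its
coefficients in the ideal that they generate. Equivalently, the associated graded ring of that ideal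
`Q` is a polynomial ring over `A ⧸ Q` in the classes of the `a i`. -/
def IsQuasiRegular (a : ι → A) : Prop :=
  ∀ (n : ℕ) (F : MvPolynomial ι A), F.IsHomogeneous n → eval a F = 0 →
    F ∈ (Ideal.span (Set.range a)).map C

namespace IsQuasiRegular

lemma mem_map_C {a : ι → A} (h : IsQuasiRegular a) {J : Ideal A}
    (hJ : Ideal.span (Set.range a) ≤ J) {F : MvPolynomial ι A} {n : ℕ} (hF : F.IsHomogeneous n)
    (hFJ : eval a F ∈ J * Ideal.span (Set.range a) ^ n) : F ∈ J.map C := by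
  obtain ⟨G, hG, hGJ, he⟩ := exists_eval_eq_of_mem_mul_span_range_pow hFJ
  have hFG := Ideal.map_mono (f := C) hJ (h n (F - G) (hF.sub hG) (by rw [map_sub, he, sub_self]))
  simpa only [sub_add_cancel] using add_mem hFG hGJ

lemma isSMulRegular_quotient_pow {a : ι → A} (h : IsQuasiRegular a) {b : A}
    (hb : IsSMulRegular (A ⧸ Ideal.span (Set.range a)) b) (n : ℕ) :
    IsSMulRegular (A ⧸ Ideal.span (Set.range a) ^ n) b := by
  simp only [isSMulRegular_quotient_iff_mem_of_smul_mem, smul_eq_mul] at hb ⊢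
  induction n with
  | zero => simp
  | succ n ih =>
    intro u hu
    obtain ⟨G, hG, rfl⟩ := Ideal.mem_span_pow_iff_exists_isHomogeneous _ _ |>.1
      (ih u (Ideal.pow_le_pow_right n.le_succ hu))
    have hbG : C b * G ∈ (Ideal.span (Set.range a)).map C :=
      h.mem_map_C le_rfl (hG.C_mul b) (by rwa [map_mul, eval_C, ← pow_succ'])
    rw [pow_succ']
    refine eval_mem_mul_span_range_pow hG (mem_map_C_iff.2 fun m => hb _ ?_)
    simpa only [coeff_C_mul] using mem_map_C_iff.1 hbG m

lemma of_castSucc {n : ℕ} {a : Fin (n + 1) → A} (h : IsQuasiRegular (a ∘ Fin.castSucc))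
    (hreg : IsSMulRegular (A ⧸ Ideal.span (Set.range (a ∘ Fin.castSucc))) (a (Fin.last n))) :
    IsQuasiRegular a := by
  set J := Ideal.span (Set.range (a ∘ Fin.castSucc))
  have hJ : J ≤ Ideal.span (Set.range a) := Ideal.span_mono (Set.range_comp_subset_range _ _)
  intro k
  induction k with
  | zero =>
    intro F hF he
    rw [← totalDegree_zero_iff_isHomogeneous, totalDegree_eq_zero_iff_eq_C] at hF
    rw [hF, eval_C] at he
    rw [hF, he, C_0]
    exact zero_mem _
  | succ k ih =>
    intro F hF he
    obtain ⟨H, G, hH, hG, rfl⟩ := exists_isHomogeneous_eq_X_last_mul_add_rename_castSucc hF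
    rw [map_add, map_mul, eval_X, eval_rename] at he
    have hHpow : eval a H ∈ J ^ (k + 1) := by
      refine mem_of_isSMulRegular_quotient_of_smul_mem (h.isSMulRegular_quotient_pow hreg _) ?_
      rw [smul_eq_mul, eq_neg_of_add_eq_zero_left he]
      exact neg_mem (eval_mem_span_range_pow hG)
    have hHQ : H ∈ (Ideal.span (Set.range a)).map C := by
      have hHQpow := Ideal.pow_right_mono hJ (k + 1) hHpow
      rw [pow_succ'] at hHQpow
      obtain ⟨H', hH', hHQ', heH'⟩ := exists_eval_eq_of_mem_mul_span_range_pow hHQpow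
      simpa only [sub_add_cancel] using
        add_mem (ih (H - H') (hH.sub hH') (by rw [map_sub, heH', sub_self])) hHQ'
    have hGQ : G ∈ (Ideal.span (Set.range a)).map C := by
      obtain ⟨g, hg, heg⟩ := Ideal.mem_span_pow_iff_exists_isHomogeneous _ _ |>.1 hHpow
      have hgG := Ideal.map_mono (f := C) hJ <| h _ (C (a (Fin.last n)) * g + G)
        ((hg.C_mul _).add hG) (by rwa [map_add, map_mul, eval_C, heg])
      refine (Ideal.add_mem_iff_right _ (Ideal.mul_mem_right _ _ ?_)).1 hgG
      exact Ideal.mem_map_of_mem C (Ideal.subset_span ⟨_, rfl⟩)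
    exact add_mem (Ideal.mul_mem_left _ _ hHQ) (rename_mem_map_C Fin.castSucc hGQ)

lemma of_isWeaklyRegular {n : ℕ} {a : Fin n → A}
    (h : RingTheory.Sequence.IsWeaklyRegular A (List.ofFn a)) : IsQuasiRegular a := by
  induction n with
  | zero =>
    intro k F _ he
    rw [eq_C_of_isEmpty F, eval_C] at he
    rw [eq_C_of_isEmpty F, he, C_0]
    exact zero_mem _
  | succ n ih =>
    rw [List.ofFn_succ', List.concat_eq_append,
      RingTheory.Sequence.isWeaklyRegular_append_iff,
      RingTheory.Sequence.isWeaklyRegular_singleton_iff, smul_eq_mul, Ideal.mul_top] at h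
    refine (ih h.1).of_castSucc ?_
    rw [← ideal_ofList_ofFn]
    exact h.2

end IsQuasiRegular

end QuasiRegularSequences

section PolynomialsModuloPrimary

open MvPolynomial

lemma order_le_totalDegree {R ι : Type*} [CommSemiring R] {p : MvPolynomial ι R} (hp : p ≠ 0) :
    (p : MvPowerSeries ι R).order ≤ p.totalDegree := by
  obtain ⟨m, hm⟩ := ne_zero_iff.1 hp
  have hle : m.degree ≤ p.totalDegree := le_totalDegree (mem_support_iff.2 hm)
  exact (MvPowerSeries.order_le (by rwa [coeff_coe])).trans (Nat.cast_le.2 hle)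

lemma isHomogeneous_of_totalDegree_le_order {R ι : Type*} [CommSemiring R] {p : MvPolynomial ι R}
    (h : p.totalDegree ≤ (p : MvPowerSeries ι R).order) : p.IsHomogeneous p.totalDegree := by
  intro m hm
  have hle : m.degree ≤ p.totalDegree := le_totalDegree (mem_support_iff.2 hm)
  have hge : (p.totalDegree : ℕ∞) ≤ m.degree :=
    h.trans (MvPowerSeries.order_le (by rwa [coeff_coe]))
  exact (DFunLike.congr_fun Finsupp.degree_eq_weight_one m).symm.trans
    (hle.antisymm (Nat.cast_le.1 hge))

lemma isHomogeneous_totalDegree_of_mul {R ι : Type*} [CommRing R] [IsDomain R]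
    {p q : MvPolynomial ι R} {n : ℕ} (h : (p * q).IsHomogeneous n) (h0 : p * q ≠ 0) :
    p.IsHomogeneous p.totalDegree := by
  have hp : p ≠ 0 := left_ne_zero_of_mul h0
  have hq : q ≠ 0 := right_ne_zero_of_mul h0
  have hdeg : p.totalDegree + q.totalDegree = n := by
    rw [← totalDegree_mul_of_isDomain hp hq, h.totalDegree h0]
  have hn : (n : ℕ∞) ≤ (p : MvPowerSeries ι R).order + (q : MvPowerSeries ι R).order := by
    rw [← MvPowerSeries.order_mul, ← coe_mul]
    refine MvPowerSeries.nat_le_order fun m hm => ?_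
    rw [coeff_coe]
    exact h.coeff_eq_zero hm.ne
  refine isHomogeneous_of_totalDegree_le_order ?_
  rw [← hdeg, Nat.cast_add] at hn
  exact (ENat.add_le_add_iff_right (ENat.natCast_ne_top _)).1
    (hn.trans (add_le_add_right (order_le_totalDegree hq) _))

variable {A : Type*} [CommRing A] {ι : Type*}

lemma mem_map_C_sup_span {J : Ideal A} {e : A} {F : MvPolynomial ι A}
    (hF : F ∈ (J ⊔ Ideal.span {e}).map C) : ∃ G, F - C e * G ∈ J.map C := by
  rw [Ideal.map_sup, Ideal.map_span, Set.image_singleton] at hF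
  obtain ⟨x, hx, y, hy, rfl⟩ := Submodule.mem_sup.1 hF
  obtain ⟨z, rfl⟩ := Ideal.mem_span_singleton'.1 hy
  exact ⟨z, by simpa [mul_comm] using hx⟩

lemma homogeneousComponent_mem_map_C {J : Ideal A} {F : MvPolynomial ι A} (hF : F ∈ J.map C)
    (n : ℕ) : homogeneousComponent n F ∈ J.map C := by
  rw [mem_map_C_iff] at hF ⊢
  intro m
  rw [coeff_homogeneousComponent]
  split_ifs
  exacts [hF m, zero_mem _]

variable [IsLocalRing A]

lemma map_residue_eq_zero_iff {F : MvPolynomial ι A} :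
    map (residue A) F = 0 ↔ F ∈ (maximalIdeal A).map C := by
  rw [mem_map_C_iff, MvPolynomial.ext_iff]
  simp [coeff_map]

lemma C_mul_mem_map_C_iff {J : Ideal A} {e : A}
    (he : ∀ x, x * e ∈ J ↔ x ∈ maximalIdeal A) {F : MvPolynomial ι A} :
    C e * F ∈ J.map C ↔ map (residue A) F = 0 := by
  rw [map_residue_eq_zero_iff, mem_map_C_iff, mem_map_C_iff]
  simp only [coeff_C_mul, mul_comm e, he]

variable [IsNoetherianRing A]

lemma exists_mem_notMem_mul_mem_iff {J K : Ideal A} (hKJ : ¬ K ≤ J)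
    (h : maximalIdeal A ≤ J.radical) :
    ∃ w ∈ K, w ∉ J ∧ ∀ x, x * w ∈ J ↔ x ∈ maximalIdeal A := by
  have : Nontrivial (K ⧸ Submodule.comap K.subtype J) :=
    Submodule.Quotient.nontrivial_iff.2 fun htop => hKJ fun x hx =>
      (htop ▸ Submodule.mem_top : (⟨x, hx⟩ : K) ∈ Submodule.comap K.subtype J)
  obtain ⟨P, hP⟩ := associatedPrimes.nonempty A (K ⧸ Submodule.comap K.subtype J)
  obtain ⟨hprime, u, hu⟩ := isAssociatedPrime_iff.1 hP
  obtain ⟨⟨w, hwK⟩, rfl⟩ := Submodule.Quotient.mk_surjective _ u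
  have mem_P : ∀ x, x ∈ P ↔ x * w ∈ J := fun x => by
    rw [hu, Submodule.mem_colon_singleton, Submodule.mem_bot, ← Submodule.Quotient.mk_smul,
      Submodule.Quotient.mk_eq_zero]
    rfl
  have hJP : J ≤ P := fun x hx => (mem_P x).2 (J.mul_mem_right w hx)
  have hP_eq : P = maximalIdeal A :=
    (le_maximalIdeal hprime.ne_top).antisymm (h.trans (hprime.radical_le_iff.2 hJP))
  refine ⟨w, hwK, fun hw => hprime.ne_top ((Ideal.eq_top_iff_one P).2 ?_), fun x => ?_⟩
  · rwa [mem_P, one_mul]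
  · rw [← mem_P, hP_eq]

lemma mem_map_C_of_mul_mem {F : MvPolynomial ι A} (hF : map (residue A) F ≠ 0) {J : Ideal A}
    (hs : maximalIdeal A ≤ J.radical) {G : MvPolynomial ι A} (h : F * G ∈ J.map C) :
    G ∈ J.map C := by
  induction J using IsNoetherian.induction generalizing G with
  | hgt J ih =>
  change Ideal A at J
  by_cases hJ : J = ⊤
  · rw [hJ, Ideal.map_top]; trivial
  obtain ⟨e, -, heJ, he⟩ := exists_mem_notMem_mul_mem_iff (mt top_le_iff.1 hJ) hs
  have hlt : J < J ⊔ Ideal.span {e} := by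
    simpa using heJ
  obtain ⟨G', hG'⟩ := mem_map_C_sup_span
    (ih _ hlt (hs.trans (Ideal.radical_mono le_sup_left)) (Ideal.map_mono le_sup_left h))
  have heFG : C e * (F * G') ∈ J.map C := by
    have : C e * (F * G') = F * G - F * (G - C e * G') := by ring
    rw [this]
    exact sub_mem h (Ideal.mul_mem_left _ _ hG')
  rw [C_mul_mem_map_C_iff he, map_mul] at heFG
  have heG := (C_mul_mem_map_C_iff he).2 ((mul_eq_zero.1 heFG).resolve_left hF)
  simpa using add_mem hG' heG

lemma exists_of_mul_sub_mul_mem {F G : MvPolynomial ι A} (hF : map (residue A) F ≠ 0)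
    (hFG : IsRelPrime (map (residue A) F) (map (residue A) G)) {J : Ideal A}
    (hs : maximalIdeal A ≤ J.radical) {X Y : MvPolynomial ι A} (h : F * Y - G * X ∈ J.map C) :
    ∃ Z, Y - G * Z ∈ J.map C ∧ X - F * Z ∈ J.map C := by
  induction J using IsNoetherian.induction generalizing X Y with
  | hgt J ih =>
  change Ideal A at J
  by_cases hJ : J = ⊤
  · rw [hJ, Ideal.map_top]; simp
  obtain ⟨e, -, heJ, he⟩ := exists_mem_notMem_mul_mem_iff (mt top_le_iff.1 hJ) hs
  have hlt : J < J ⊔ Ideal.span {e} := by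
    simpa using heJ
  obtain ⟨Z, hY, hX⟩ :=
    ih _ hlt (hs.trans (Ideal.radical_mono le_sup_left)) (Ideal.map_mono le_sup_left h)
  obtain ⟨Y', hY'⟩ := mem_map_C_sup_span hY
  obtain ⟨X', hX'⟩ := mem_map_C_sup_span hX
  have hcross : C e * (F * Y' - G * X') ∈ J.map C := by
    have : C e * (F * Y' - G * X') = (F * Y - G * X) - F * (Y - G * Z - C e * Y')
      + G * (X - F * Z - C e * X') := by ring
    rw [this]
    exact add_mem (sub_mem h (Ideal.mul_mem_left _ _ hY')) (Ideal.mul_mem_left _ _ hX')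
  rw [C_mul_mem_map_C_iff he, map_sub, map_mul, map_mul, sub_eq_zero] at hcross
  obtain ⟨W, hW⟩ := hFG.dvd_of_dvd_mul_left (Dvd.intro _ hcross)
  obtain ⟨Z', rfl⟩ := map_surjective (residue A) residue_surjective W
  refine ⟨Z + C e * Z', ?_, ?_⟩
  · have hYZ' : C e * (Y' - G * Z') ∈ J.map C := by
      rw [C_mul_mem_map_C_iff he, map_sub, map_mul, sub_eq_zero]
      rw [hW] at hcross
      refine mul_left_cancel₀ hF ?_
      rw [hcross]; ring
    have : Y - G * (Z + C e * Z') = (Y - G * Z - C e * Y') + C e * (Y' - G * Z') := by ring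
    rw [this]
    exact add_mem hY' hYZ'
  · have hXZ' : C e * (X' - F * Z') ∈ J.map C := by
      rw [C_mul_mem_map_C_iff he, map_sub, map_mul, sub_eq_zero, hW]
    have : X - F * (Z + C e * Z') = (X - F * Z - C e * X') + C e * (X' - F * Z') := by ring
    rw [this]
    exact add_mem hX' hXZ'

lemma exists_of_mul_sub_mul_mem_of_isHomogeneous {F G : MvPolynomial ι A}
    (hF : map (residue A) F ≠ 0) (hFG : IsRelPrime (map (residue A) F) (map (residue A) G))
    {J : Ideal A} (hs : maximalIdeal A ≤ J.radical) {X Y : MvPolynomial ι A}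
    (h : F * Y - G * X ∈ J.map C) {k l q r : ℕ} (hFk : F.IsHomogeneous k)
    (hGl : G.IsHomogeneous l) (hY : Y.IsHomogeneous q) (hX : X.IsHomogeneous r)
    (hkl : k + q = l + r) :
    ∃ Z, (Y - G * Z).IsHomogeneous q ∧ Y - G * Z ∈ J.map C ∧
      (X - F * Z).IsHomogeneous r ∧ X - F * Z ∈ J.map C := by
  obtain ⟨Z, hYZ, hXZ⟩ := exists_of_mul_sub_mul_mem hF hFG hs h
  have hYmem := homogeneousComponent_mem_map_C hYZ q
  have hXmem := homogeneousComponent_mem_map_C hXZ r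
  have hYhom := homogeneousComponent_isHomogeneous q (Y - G * Z)
  have hXhom := homogeneousComponent_isHomogeneous r (X - F * Z)
  rw [map_sub, homogeneousComponent_eq_self hY, homogeneousComponent_mul_of_isHomogeneous hGl]
    at hYmem hYhom
  rw [map_sub, homogeneousComponent_eq_self hX, homogeneousComponent_mul_of_isHomogeneous hFk]
    at hXmem hXhom
  by_cases hkr : k ≤ r
  · rw [if_pos hkr] at hXmem hXhom
    rw [if_pos (by omega), show q - l = r - k by omega] at hYmem hYhom
    exact ⟨_, hYhom, hYmem, hXhom, hXmem⟩
  · rw [if_neg hkr] at hXmem hXhom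
    rw [if_neg (by omega)] at hYmem hYhom
    exact ⟨0, by simpa using hYhom, by simpa using hYmem, by simpa using hXhom,
      by simpa using hXmem⟩

end PolynomialsModuloPrimary

section LowestTerms

open MvPolynomial

variable {A : Type*} [CommRing A] {ι : Type*} {a : ι → A}

lemma mem_pow_of_mem_mul_pow {J K : Ideal A} {m n : ℕ} (hmn : m ≤ n) {x : A}
    (hx : x ∈ J * K ^ n) : x ∈ K ^ m :=
  Ideal.pow_le_pow_right hmn (Ideal.mul_le_right hx)

lemma eval_mul_mem_of_mem_map_C {F : MvPolynomial ι A} {n : ℕ} (hF : F.IsHomogeneous n)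
    {J K : Ideal A} (hFJ : F ∈ J.map C) {y : A} (hy : ∀ r ∈ J, r * y ∈ K) :
    eval a F * y ∈ K * Ideal.span (Set.range a) ^ n := by
  have hJy : J * Ideal.span {y} ≤ K := Ideal.mul_le.2 fun r hr s hs => by
    obtain ⟨t, rfl⟩ := Ideal.mem_span_singleton'.1 hs
    exact mul_left_comm t r y ▸ K.mul_mem_left t (hy r hr)
  have h := Ideal.mul_mem_mul (eval_mem_mul_span_range_pow (a := a) hF hFJ)
    (Ideal.mem_span_singleton_self y)
  rw [mul_right_comm] at h
  exact Ideal.mul_mono_left hJy h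

variable [IsLocalRing A]

lemma exists_isHomogeneous_map_residue_eq {p : MvPolynomial ι (ResidueField A)} {n : ℕ}
    (hp : p.IsHomogeneous n) :
    ∃ F : MvPolynomial ι A, F.IsHomogeneous n ∧ map (residue A) F = p := by
  obtain ⟨F, rfl⟩ := map_surjective (residue A) residue_surjective p
  refine ⟨homogeneousComponent n F, homogeneousComponent_isHomogeneous n F, ?_⟩
  ext m
  rw [coeff_map, coeff_homogeneousComponent, coeff_map]
  split_ifs with h
  · rfl
  · rw [map_zero, ← coeff_map, hp.coeff_eq_zero h]

lemma exists_isHomogeneous_reduced_factors {f g : MvPolynomial ι A} {k i : ℕ}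
    (hf : f.IsHomogeneous k) (hg : g.IsHomogeneous (k + i)) (hf0 : map (residue A) f ≠ 0) :
    ∃ (l k' : ℕ) (H F G : MvPolynomial ι A), l + k' = k ∧ H.IsHomogeneous l ∧
      F.IsHomogeneous k' ∧ G.IsHomogeneous (k' + i) ∧ map (residue A) H ≠ 0 ∧
      map (residue A) F ≠ 0 ∧ IsRelPrime (map (residue A) F) (map (residue A) G) ∧
      f - H * F ∈ (maximalIdeal A).map C ∧ g - H * G ∈ (maximalIdeal A).map C := by
  obtain ⟨F₀, G₀, H₀, hrel, hF₀, hG₀⟩ :=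
    UniqueFactorizationMonoid.exists_reduced_factors (map (residue A) f) hf0 (map (residue A) g)
  have hfh : (H₀ * F₀).IsHomogeneous k := hF₀ ▸ hf.map _
  have hgh : (G₀ * H₀).IsHomogeneous (k + i) := by rw [mul_comm, hG₀]; exact hg.map _
  rw [← hF₀] at hf0
  have hH : H₀.IsHomogeneous H₀.totalDegree := isHomogeneous_totalDegree_of_mul hfh hf0
  have hF : F₀.IsHomogeneous F₀.totalDegree := by
    rw [mul_comm] at hfh hf0
    exact isHomogeneous_totalDegree_of_mul hfh hf0
  have hdeg : H₀.totalDegree + F₀.totalDegree = k := (hH.mul hF).inj_right hfh hf0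
  have hG : G₀.IsHomogeneous (F₀.totalDegree + i) := by
    rcases eq_or_ne G₀ 0 with rfl | hG0
    · exact isHomogeneous_zero _ _ _
    have hne := mul_ne_zero hG0 (left_ne_zero_of_mul hf0)
    have hG := isHomogeneous_totalDegree_of_mul hgh hne
    have := (hG.mul hH).inj_right hgh hne
    rwa [show F₀.totalDegree + i = G₀.totalDegree by omega]
  obtain ⟨F, hF', rfl⟩ := exists_isHomogeneous_map_residue_eq hF
  obtain ⟨G, hG', rfl⟩ := exists_isHomogeneous_map_residue_eq hG
  obtain ⟨H, hH', rfl⟩ := exists_isHomogeneous_map_residue_eq hH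
  refine ⟨_, _, H, F, G, hdeg, hH', hF', hG', left_ne_zero_of_mul hf0, right_ne_zero_of_mul hf0,
    hrel, map_residue_eq_zero_iff.1 ?_, map_residue_eq_zero_iff.1 ?_⟩
  · rw [map_sub, map_mul, hF₀, sub_self]
  · rw [map_sub, map_mul, hG₀, sub_self]

/-- A quasi-regular family whose ideal is primary to the maximal ideal: for finite families over a
Noetherian local ring, a system of parameters of a Cohen–Macaulay ring. Modulo any ideal containing
the family, its leading forms have coefficients in an Artinian ring. -/
structure IsQuasiRegularParameters (a : ι → A) : Prop where
  isQuasiRegular : IsQuasiRegular a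
  maximalIdeal_le_radical : maximalIdeal A ≤ (Ideal.span (Set.range a)).radical

/-- `y = (g / f) x` in `⨁ₘ A / I (a)ᵐ`, where `x` sits in degree `n` and `y` in degree `n + i`, for
forms `f` and `g` evaluated at `a` with `deg g - deg f = i` and `f` nonzero over the residue
field. -/
def IsFractionMul (a : ι → A) (I : Ideal A) (n i : ℕ) (x y : A) : Prop :=
  ∃ (k : ℕ) (f g : MvPolynomial ι A), f.IsHomogeneous k ∧ g.IsHomogeneous (k + i) ∧
    map (residue A) f ≠ 0 ∧
    eval a f * y - eval a g * x ∈ I * Ideal.span (Set.range a) ^ (n + k + i)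

lemma IsFractionMul.of_sub_eval_mul_mem {I : Ideal A} {n l i : ℕ} {x y z : A}
    (h : IsFractionMul a I (n + l) i x y) {F : MvPolynomial ι A} (hF : F.IsHomogeneous l)
    (hx : x - eval a F * z ∈ I * Ideal.span (Set.range a) ^ (n + l)) :
    IsFractionMul a I n (i + l) z y := by
  obtain ⟨k, f, g, hf, hg, hf0, hfg⟩ := h
  refine ⟨k, f, g * F, hf, add_assoc k i l ▸ hg.mul hF, hf0, ?_⟩
  have hgx : (x - eval a F * z) * eval a g ∈ I * Ideal.span (Set.range a) ^ (n + l + k + i) := by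
    rw [add_assoc (n + l), pow_add, ← mul_assoc]
    exact Ideal.mul_mem_mul hx (eval_mem_span_range_pow hg)
  rw [show n + k + (i + l) = n + l + k + i by ring, map_mul]
  convert add_mem hfg hgx using 1
  ring

namespace IsQuasiRegularParameters

variable [IsNoetherianRing A]

lemma mem_map_C_of_eval_mul_mem (ha : IsQuasiRegularParameters a) {J : Ideal A}
    (hJ : Ideal.span (Set.range a) ≤ J) {F X : MvPolynomial ι A} {k n : ℕ}
    (hFk : F.IsHomogeneous k) (hF : map (residue A) F ≠ 0) (hX : X.IsHomogeneous n)
    (h : eval a F * eval a X ∈ J * Ideal.span (Set.range a) ^ (n + k)) : X ∈ J.map C := by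
  refine mem_map_C_of_mul_mem hF (ha.maximalIdeal_le_radical.trans (Ideal.radical_mono hJ))
    (ha.isQuasiRegular.mem_map_C hJ (hFk.mul hX) ?_)
  rwa [map_mul, add_comm]

lemma mem_of_eval_mul_mem (ha : IsQuasiRegularParameters a) {J : Ideal A}
    (hJ : Ideal.span (Set.range a) ≤ J) {F : MvPolynomial ι A} {k : ℕ} (hFk : F.IsHomogeneous k)
    (hF : map (residue A) F ≠ 0) {n : ℕ} {x : A}
    (hx : eval a F * x ∈ J * Ideal.span (Set.range a) ^ (n + k)) :
    x ∈ J * Ideal.span (Set.range a) ^ n := by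
  have mem_pow : ∀ j ≤ n, x ∈ Ideal.span (Set.range a) ^ j := by
    intro j
    induction j with
    | zero => simp
    | succ j ih =>
      intro hj
      obtain ⟨X, hX, rfl⟩ := (Ideal.mem_span_pow_iff_exists_isHomogeneous _ _).1 (ih (by omega))
      rw [pow_succ']
      refine eval_mem_mul_span_range_pow hX (ha.mem_map_C_of_eval_mul_mem le_rfl hFk hF hX ?_)
      rw [← pow_succ']
      exact mem_pow_of_mem_mul_pow (by omega) hx
  obtain ⟨X, hX, rfl⟩ := (Ideal.mem_span_pow_iff_exists_isHomogeneous _ _).1 (mem_pow n le_rfl)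
  exact eval_mem_mul_span_range_pow hX (ha.mem_map_C_of_eval_mul_mem hJ hFk hF hX hx)

section CommonFactor

variable {F G : MvPolynomial ι A} {k i : ℕ}

lemma exists_sub_mem_mul_pow (ha : IsQuasiRegularParameters a) {J : Ideal A}
    (hJ : Ideal.span (Set.range a) ≤ J) (hFk : F.IsHomogeneous k) (hG : G.IsHomogeneous (k + i))
    (hF : map (residue A) F ≠ 0) (hFG : IsRelPrime (map (residue A) F) (map (residue A) G))
    {n : ℕ} {x y z : A}
    (h : eval a F * y - eval a G * x ∈ J * Ideal.span (Set.range a) ^ (n + k + i))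
    (hy : y - eval a G * z ∈ Ideal.span (Set.range a) ^ (n + i))
    (hx : x - eval a F * z ∈ Ideal.span (Set.range a) ^ n) :
    ∃ z, y - eval a G * z ∈ J * Ideal.span (Set.range a) ^ (n + i) ∧
      x - eval a F * z ∈ J * Ideal.span (Set.range a) ^ n := by
  obtain ⟨Y, hY, hYe⟩ := (Ideal.mem_span_pow_iff_exists_isHomogeneous _ _).1 hy
  obtain ⟨X, hX, hXe⟩ := (Ideal.mem_span_pow_iff_exists_isHomogeneous _ _).1 hx
  have hGX : (G * X).IsHomogeneous (k + (n + i)) := by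
    rw [add_left_comm, add_comm n]
    exact hG.mul hX
  have hrel : F * Y - G * X ∈ J.map C := by
    refine ha.isQuasiRegular.mem_map_C hJ ((hFk.mul hY).sub hGX) ?_
    rw [map_sub, map_mul, map_mul, hYe, hXe]
    convert h using 1 <;> ring
  obtain ⟨Z, hYZ, hYZ', hXZ, hXZ'⟩ := exists_of_mul_sub_mul_mem_of_isHomogeneous hF hFG
    (ha.maximalIdeal_le_radical.trans (Ideal.radical_mono hJ)) hrel hFk hG hY hX (by ring)
  have hy' := eval_mem_mul_span_range_pow (a := a) hYZ hYZ'
  have hx' := eval_mem_mul_span_range_pow (a := a) hXZ hXZ'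
  rw [map_sub, map_mul, hYe] at hy'
  rw [map_sub, map_mul, hXe] at hx'
  refine ⟨z + eval a Z, ?_, ?_⟩
  · convert hy' using 1
    ring
  · convert hx' using 1
    ring

lemma exists_common_factor (ha : IsQuasiRegularParameters a) {J : Ideal A}
    (hJ : Ideal.span (Set.range a) ≤ J) (hFk : F.IsHomogeneous k) (hG : G.IsHomogeneous (k + i))
    (hF : map (residue A) F ≠ 0) (hFG : IsRelPrime (map (residue A) F) (map (residue A) G))
    {n : ℕ} {x y : A}
    (h : eval a F * y - eval a G * x ∈ J * Ideal.span (Set.range a) ^ (n + k + i)) :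
    ∃ z, y - eval a G * z ∈ J * Ideal.span (Set.range a) ^ (n + i) ∧
      x - eval a F * z ∈ J * Ideal.span (Set.range a) ^ n := by
  have exists_mem_pow : ∀ j ≤ n, ∃ z, y - eval a G * z ∈ Ideal.span (Set.range a) ^ (j + i) ∧
      x - eval a F * z ∈ Ideal.span (Set.range a) ^ j := by
    intro j
    induction j with
    | zero =>
      intro _
      have hGx : eval a G * x ∈ Ideal.span (Set.range a) ^ (i + k) :=
        Ideal.mul_mem_right _ _ (add_comm i k ▸ eval_mem_span_range_pow hG)
      have hFy : eval a F * y ∈ ⊤ * Ideal.span (Set.range a) ^ (i + k) := by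
        simpa using add_mem (mem_pow_of_mem_mul_pow (show i + k ≤ n + k + i by omega) h) hGx
      exact ⟨0, by simpa using ha.mem_of_eval_mul_mem le_top hFk hF hFy, by simp⟩
    | succ j ih =>
      intro hj
      obtain ⟨z, hy, hx⟩ := ih (by omega)
      have h' := mem_pow_of_mem_mul_pow (show j + k + i + 1 ≤ n + k + i by omega) h
      rw [pow_succ'] at h'
      obtain ⟨z', hy', hx'⟩ := ha.exists_sub_mem_mul_pow le_rfl hFk hG hF hFG h' hy hx
      rw [← pow_succ'] at hy' hx'
      exact ⟨z', add_right_comm j i 1 ▸ hy', hx'⟩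
  obtain ⟨z, hy, hx⟩ := exists_mem_pow n le_rfl
  exact ha.exists_sub_mem_mul_pow hJ hFk hG hF hFG h hy hx

end CommonFactor

lemma mul_mem_of_isFractionMul (ha : IsQuasiRegularParameters a) {I : Ideal A}
    (hI : Ideal.span (Set.range a) ≤ I) {n i : ℕ} {x y r : A}
    (hx : r * x ∈ I * Ideal.span (Set.range a) ^ n) (h : IsFractionMul a I n i x y) :
    r * y ∈ I * Ideal.span (Set.range a) ^ (n + i) := by
  obtain ⟨k, f, g, hf, hg, hf0, hfg⟩ := h
  refine ha.mem_of_eval_mul_mem hI hf hf0 ?_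
  have hgx : r * x * eval a g ∈ I * Ideal.span (Set.range a) ^ (n + k + i) := by
    rw [add_assoc n, pow_add, ← mul_assoc]
    exact Ideal.mul_mem_mul hx (eval_mem_span_range_pow hg)
  rw [add_right_comm n i k]
  convert add_mem (Ideal.mul_mem_left _ r hfg) hgx using 1
  ring

lemma exists_lowest_terms (ha : IsQuasiRegularParameters a) {I : Ideal A}
    (hI : Ideal.span (Set.range a) ≤ I) {n i : ℕ} {x y : A}
    (hx : ∀ r ∈ maximalIdeal A, r * x ∈ I * Ideal.span (Set.range a) ^ n)
    (hx' : x ∉ I * Ideal.span (Set.range a) ^ n) (h : IsFractionMul a I n i x y) :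
    ∃ k ≤ n, ∃ (F G : MvPolynomial ι A) (z : A), F.IsHomogeneous k ∧
      G.IsHomogeneous (k + i) ∧ map (residue A) F ≠ 0 ∧
      y - eval a G * z ∈ I * Ideal.span (Set.range a) ^ (n + i) ∧
      x - eval a F * z ∈ I * Ideal.span (Set.range a) ^ n := by
  have hy : ∀ r ∈ maximalIdeal A, r * y ∈ I * Ideal.span (Set.range a) ^ (n + i) :=
    fun r hr => ha.mul_mem_of_isFractionMul hI (hx r hr) h
  obtain ⟨k, f, g, hf, hg, hf0, h⟩ := h
  obtain ⟨l, k', H, F, G, rfl, hH, hF, hG, hH0, hF0, hrel, hfF, hgG⟩ :=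
    exists_isHomogeneous_reduced_factors hf hg hf0
  have hfy : eval a (f - H * F) * y ∈ I * Ideal.span (Set.range a) ^ (n + (l + k') + i) := by
    have := eval_mul_mem_of_mem_map_C (a := a) (hf.sub (hH.mul hF)) hfF hy
    rwa [mul_assoc, ← pow_add, add_right_comm] at this
  have hgx : eval a (g - H * G) * x ∈ I * Ideal.span (Set.range a) ^ (n + (l + k') + i) := by
    have := eval_mul_mem_of_mem_map_C (a := a) (hg.sub (add_assoc l k' i ▸ hH.mul hG)) hgG hx
    rwa [mul_assoc, ← pow_add, ← add_assoc] at this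
  have hHFG : eval a H * (eval a F * y - eval a G * x) ∈
      I * Ideal.span (Set.range a) ^ (n + k' + i + l) := by
    rw [show n + k' + i + l = n + (l + k') + i by omega]
    convert add_mem (sub_mem h hfy) hgx using 1
    simp only [map_sub, map_mul]
    ring
  obtain ⟨z, hyz, hxz⟩ := ha.exists_common_factor hI hF hG hF0 hrel
    (ha.mem_of_eval_mul_mem hI hH hH0 hHFG)
  refine ⟨k', ?_, F, G, z, hF, hG, hF0, hyz, hxz⟩
  by_contra! hlt
  have hFz : eval a F * z ∈ I * Ideal.span (Set.range a) ^ n := by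
    refine Ideal.mul_mem_right _ _ (Ideal.mul_mono_left hI ?_)
    rw [← pow_succ']
    exact Ideal.pow_le_pow_right hlt (eval_mem_span_range_pow hF)
  exact hx' (by simpa using add_mem hxz hFz)

end IsQuasiRegularParameters

end LowestTerms

section Lengths

lemma length_quotient_eq_length_quotient_comap_add {R P M : Type*} [Ring R] [AddCommGroup P]
    [Module R P] [AddCommGroup M] [Module R M] (φ : P →ₗ[R] M) (N : Submodule R M) :
    Module.length R (M ⧸ N) =
      Module.length R (P ⧸ N.comap φ) + Module.length R (M ⧸ N ⊔ LinearMap.range φ) := by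
  refine Module.length_eq_add_of_exact (Submodule.mapQ (N.comap φ) N φ le_rfl)
    (Submodule.factor le_sup_left) ?_ (Submodule.factor_surjective _) fun x => ?_
  · rw [← LinearMap.ker_eq_bot, Submodule.ker_mapQ, Submodule.mkQ_map_self]
  · obtain ⟨x, rfl⟩ := N.mkQ_surjective x
    change _ ↔ _ ∈ LinearMap.range _
    rw [Submodule.range_mapQ, ← Submodule.mem_comap,
      Submodule.comap_map_mkQ, Submodule.factor_mk, Submodule.mkQ_apply,
      Submodule.Quotient.mk_eq_zero]

lemma length_quotient_maximalIdeal (A : Type*) [CommRing A] [IsLocalRing A] :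
    Module.length A (A ⧸ maximalIdeal A) = 1 := by
  have : IsSimpleModule A (A ⧸ maximalIdeal A) :=
    isSimpleModule_iff_isCoatom.2 (maximalIdeal.isMaximal A).out
  exact Module.length_eq_one A _

open MvPolynomial

variable {A : Type*} [CommRing A] {ι : Type*}

/-- The map sending a form `F` of degree `n` to `F(b) * w`; its fibres count the generators of
`w (b)ⁿ` modulo an ideal. -/
noncomputable def evalMul (b : ι → A) (n : ℕ) (w : A) : homogeneousSubmodule ι A n →ₗ[A] A :=
  LinearMap.mulRight A w ∘ₗ (aeval b).toLinearMap ∘ₗ (homogeneousSubmodule ι A n).subtype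

lemma evalMul_apply (b : ι → A) (n : ℕ) (w : A) (F : homogeneousSubmodule ι A n) :
    evalMul b n w F = eval b F.1 * w := by
  simp [evalMul]

lemma range_evalMul (b : ι → A) (n : ℕ) (w : A) :
    LinearMap.range (evalMul b n w) = Ideal.span {w} * Ideal.span (Set.range b) ^ n := by
  ext x
  simp only [LinearMap.mem_range, evalMul_apply, Ideal.mem_span_singleton_mul,
    Ideal.mem_span_pow_iff_exists_isHomogeneous]
  constructor
  · rintro ⟨F, rfl⟩
    exact ⟨_, ⟨F.1, F.2, rfl⟩, mul_comm _ _⟩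
  · rintro ⟨_, ⟨F, hF, rfl⟩, rfl⟩
    exact ⟨⟨F, hF⟩, mul_comm _ _⟩

variable [Fintype ι]

lemma length_homogeneousSubmodule_quotient (n : ℕ) (J : Ideal A) :
    Module.length A (homogeneousSubmodule ι A n ⧸
        (Submodule.restrictScalars A (J.map C)).submoduleOf (homogeneousSubmodule ι A n)) =
      (Fintype.card ι).multichoose n * Module.length A (A ⧸ J) := by
  classical
  let S := Finset.finsuppAntidiag (Finset.univ : Finset ι) n
  have mem_S : ∀ m, m ∈ S ↔ m.degree = n := fun m => by
    simp [S, Finset.mem_finsuppAntidiag, Finsupp.degree_eq_sum]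
  let coeffs : homogeneousSubmodule ι A n →ₗ[A] (S → A ⧸ J) :=
    LinearMap.pi fun m => J.mkQ ∘ₗ lcoeff A m.1 ∘ₗ (homogeneousSubmodule ι A n).subtype
  have coeffs_apply : ∀ F m, coeffs F m = Submodule.Quotient.mk (coeff m.1 F.1) :=
    fun _ _ => rfl
  have hsurj : Function.Surjective coeffs := by
    intro v
    choose c hc using fun s => Submodule.Quotient.mk_surjective J (v s)
    refine ⟨⟨∑ s, monomial s.1 (c s), sum_mem fun s _ =>
      isHomogeneous_monomial _ ((mem_S s.1).1 s.2)⟩, funext fun s => ?_⟩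
    rw [coeffs_apply, ← hc, coeff_sum, Finset.sum_eq_single s]
    · simp
    · intro t _ ht
      rw [coeff_monomial, if_neg (Subtype.coe_injective.ne ht)]
    · simp
  have hker : LinearMap.ker coeffs =
      (Submodule.restrictScalars A (J.map C)).submoduleOf (homogeneousSubmodule ι A n) := by
    ext F
    rw [LinearMap.mem_ker, Submodule.submoduleOf, Submodule.mem_comap, Submodule.subtype_apply,
       Submodule.restrictScalars_mem,
      mem_map_C_iff, funext_iff]
    simp only [coeffs_apply, Pi.zero_apply, Submodule.Quotient.mk_eq_zero]
    refine ⟨fun h m => ?_, fun h m => h m.1⟩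
    by_cases hm : m ∈ S
    · exact h ⟨m, hm⟩
    · rw [IsHomogeneous.coeff_eq_zero F.2 (mt (mem_S m).2 hm)]
      exact zero_mem _
  rw [← hker, (coeffs.quotKerEquivOfSurjective hsurj).length_eq, Module.length_pi,
    ENat.card_eq_coe_fintype_card, Fintype.card_coe,
    Finset.card_finsuppAntidiag_nat_eq_multichoose, Finset.card_univ]

lemma multichoose_mul_length_add_le (b : ι → A) (n : ℕ) (w : A) {M₀ M₁ J : Ideal A}
    (h₁ : M₀ ⊔ Ideal.span {w} * Ideal.span (Set.range b) ^ n ≤ M₁)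
    (h₀ : ∀ F : MvPolynomial ι A, F.IsHomogeneous n → eval b F * w ∈ M₀ → F ∈ J.map C) :
    (Fintype.card ι).multichoose n * Module.length A (A ⧸ J) + Module.length A (A ⧸ M₁) ≤
      Module.length A (A ⧸ M₀) := by
  rw [length_quotient_eq_length_quotient_comap_add (evalMul b n w) M₀,
    ← length_homogeneousSubmodule_quotient, range_evalMul]
  gcongr
  · refine Module.length_le_of_surjective (Submodule.factor fun F hF => ?_)
      (Submodule.factor_surjective _)
    rw [Submodule.mem_comap, evalMul_apply] at hF
    exact h₀ F.1 F.2 hF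
  · exact Module.length_le_of_surjective (Submodule.factor h₁) (Submodule.factor_surjective _)

lemma length_eq_multichoose_mul_add (b : ι → A) (n : ℕ) (w : A) {M₀ J : Ideal A}
    (h : ∀ F : MvPolynomial ι A, F.IsHomogeneous n → (eval b F * w ∈ M₀ ↔ F ∈ J.map C)) :
    Module.length A (A ⧸ M₀) =
      (Fintype.card ι).multichoose n * Module.length A (A ⧸ J) +
        Module.length A (A ⧸ M₀ ⊔ Ideal.span {w} * Ideal.span (Set.range b) ^ n) := by
  have hcomap : Submodule.comap (evalMul b n w) M₀ =
      (Submodule.restrictScalars A (J.map C)).submoduleOf (homogeneousSubmodule ι A n) := by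
    ext F
    rw [Submodule.mem_comap, evalMul_apply]
    exact h F.1 F.2
  rw [length_quotient_eq_length_quotient_comap_add (evalMul b n w) M₀, hcomap,
    length_homogeneousSubmodule_quotient, range_evalMul]

end Lengths

section Socle

open MvPolynomial

variable {A : Type*} [CommRing A]

lemma mul_pow_le_pow_succ {I Q : Ideal A} (hQI : Q ≤ I) (n : ℕ) : I * Q ^ n ≤ I ^ (n + 1) := by
  rw [pow_succ']
  exact Ideal.mul_mono_right (Ideal.pow_right_mono hQI n)

lemma span_singleton_mul_pow_le_pow_add {I Q : Ideal A} (hQI : Q ≤ I) {x : A} {i : ℕ}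
    (hx : x ∈ I ^ i) (n : ℕ) : Ideal.span {x} * Q ^ n ≤ I ^ (n + i) := by
  rw [add_comm, pow_add]
  exact Ideal.mul_mono ((Ideal.span_singleton_le_iff_mem _).2 hx) (Ideal.pow_right_mono hQI n)

lemma mem_sup_of_sub_mul_mem {I Q : Ideal A} {n i : ℕ} {u v x y z : A} (hu : IsUnit u)
    (hv : v ∈ Q ^ i) (hy : y - v * z ∈ I * Q ^ (n + i)) (hx : x - u * z ∈ I * Q ^ n) :
    y ∈ I * Q ^ (n + i) ⊔ Ideal.span {x} * Q ^ i := by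
  obtain ⟨u, rfl⟩ := hu
  have hvx : x * (v * ↑u⁻¹) ∈ Ideal.span {x} * Q ^ i :=
    Ideal.mul_mem_mul (Ideal.mem_span_singleton_self x) (Ideal.mul_mem_right _ _ hv)
  have hxz : (x - u * z) * (v * ↑u⁻¹) ∈ I * Q ^ (n + i) := by
    rw [pow_add, ← mul_assoc]
    exact Ideal.mul_mem_mul hx (Ideal.mul_mem_right _ _ hv)
  convert Submodule.add_mem_sup (sub_mem hy hxz) hvx using 1
  linear_combination (-(v * z)) * u.mul_inv

variable {ι : Type*} {a : ι → A}

namespace IsQuasiRegular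

variable [Fintype ι]

lemma length_quotient_mul_pow (h : IsQuasiRegular a) {J : Ideal A}
    (hJ : Ideal.span (Set.range a) ≤ J) (n : ℕ) :
    Module.length A (A ⧸ J * Ideal.span (Set.range a) ^ n) =
      (Fintype.card ι).multichoose n * Module.length A (A ⧸ J) +
        Module.length A (A ⧸ Ideal.span (Set.range a) ^ n) := by
  rw [length_eq_multichoose_mul_add a n 1 (J := J) fun F hF => ?_, Ideal.span_singleton_one,
    Ideal.top_mul, sup_eq_right.2 Ideal.mul_le_right]
  rw [mul_one]
  exact ⟨h.mem_map_C hJ hF, eval_mem_mul_span_range_pow hF⟩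

lemma length_quotient_pow_succ (h : IsQuasiRegular a) (n : ℕ) :
    Module.length A (A ⧸ Ideal.span (Set.range a) ^ (n + 1)) =
      (Fintype.card ι + 1).multichoose n * Module.length A (A ⧸ Ideal.span (Set.range a)) := by
  induction n with
  | zero => rw [zero_add, pow_one, Nat.multichoose_zero_right, Nat.cast_one, one_mul]
  | succ n ih =>
    rw [pow_succ', h.length_quotient_mul_pow le_rfl, ih, Nat.multichoose_succ_succ, Nat.cast_add,
      add_mul]

end IsQuasiRegular

variable [IsLocalRing A]

lemma isUnit_eval_of_isHomogeneous_zero {F : MvPolynomial ι A} (hF : F.IsHomogeneous 0)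
    (hF0 : map (residue A) F ≠ 0) : IsUnit (eval a F) := by
  rw [← totalDegree_zero_iff_isHomogeneous, totalDegree_eq_zero_iff_eq_C] at hF
  rw [hF, map_C, map_ne_zero_iff C (C_injective _ _)] at hF0
  rw [hF, eval_C]
  exact residue_ne_zero_iff_isUnit _ |>.1 hF0

namespace IsQuasiRegularParameters

variable [IsNoetherianRing A] {I : Ideal A}

lemma eval_mul_mem_iff (ha : IsQuasiRegularParameters a) (hI : Ideal.span (Set.range a) ≤ I)
    {m n : ℕ} {w : A} (hw : w ∉ I * Ideal.span (Set.range a) ^ m)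
    (hmw : ∀ r ∈ maximalIdeal A, r * w ∈ I * Ideal.span (Set.range a) ^ m)
    {F : MvPolynomial ι A} (hF : F.IsHomogeneous n) :
    eval a F * w ∈ I * Ideal.span (Set.range a) ^ (m + n) ↔ F ∈ (maximalIdeal A).map C := by
  refine ⟨fun h => ?_, fun h => ?_⟩
  · by_contra hF0
    exact hw (ha.mem_of_eval_mul_mem hI hF (mt map_residue_eq_zero_iff.1 hF0) h)
  · rw [pow_add, ← mul_assoc]
    exact eval_mul_mem_of_mem_map_C hF h hmw

lemma length_quotient_mul_pow_eq (ha : IsQuasiRegularParameters a) [Fintype ι]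
    (hI : Ideal.span (Set.range a) ≤ I) {m : ℕ} {w : A}
    (hw : w ∉ I * Ideal.span (Set.range a) ^ m)
    (hmw : ∀ r ∈ maximalIdeal A, r * w ∈ I * Ideal.span (Set.range a) ^ m) (n : ℕ) :
    Module.length A (A ⧸ I * Ideal.span (Set.range a) ^ (m + n)) =
      (Fintype.card ι).multichoose n +
        Module.length A (A ⧸ I * Ideal.span (Set.range a) ^ (m + n) ⊔
          Ideal.span {w} * Ideal.span (Set.range a) ^ n) := by
  rw [length_eq_multichoose_mul_add a n w (J := maximalIdeal A)
    fun F hF => ha.eval_mul_mem_iff hI hw hmw hF, length_quotient_maximalIdeal, mul_one]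

/-- Otherwise `w (a)ᵏ⁺ⁱ` and `y (a)ᵏ` would together be too long to fit between `I (a)ᵏ⁺ⁱ⁺¹` and
`Iᵏ⁺ⁱ⁺²`. -/
lemma isFractionMul_of_length_quotient_lt [Fintype ι] (ha : IsQuasiRegularParameters a)
    (hI : Ideal.span (Set.range a) ≤ I) {w : A} (hwI : w ∈ I ^ 2)
    (hw : w ∉ I * Ideal.span (Set.range a))
    (hmw : ∀ r ∈ maximalIdeal A, r * w ∈ I * Ideal.span (Set.range a)) {i k : ℕ} {y : A}
    (hy : y ∈ I ^ (i + 2))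
    (hlt : Module.length A (A ⧸ I * Ideal.span (Set.range a) ^ (1 + k + i)) <
      (Fintype.card ι).multichoose (k + i) + ((Fintype.card ι).multichoose k +
        Module.length A (A ⧸ I ^ (k + i + 2)))) :
    IsFractionMul a I 1 i w y := by
  contrapose! hlt with hyw
  rw [← pow_one (Ideal.span (Set.range a))] at hw hmw
  set Q := Ideal.span (Set.range a)
  have hle : (I * Q ^ (1 + (k + i)) ⊔ Ideal.span {w} * Q ^ (k + i)) ⊔ Ideal.span {y} * Q ^ k ≤
      I ^ (k + i + 2) := by
    refine sup_le (sup_le ?_ (span_singleton_mul_pow_le_pow_add hI hwI _)) ?_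
    · rw [show k + i + 2 = 1 + (k + i) + 1 by ring]
      exact mul_pow_le_pow_succ hI _
    · exact span_singleton_mul_pow_le_pow_add hI hy k
  have h := multichoose_mul_length_add_le a k y (J := maximalIdeal A) hle fun F hF hFy => ?_
  · rw [length_quotient_maximalIdeal, mul_one] at h
    rw [add_assoc 1 k, ha.length_quotient_mul_pow_eq hI hw hmw]
    gcongr
  · by_contra hF0
    obtain ⟨u, hu, v, hv, huv⟩ := Submodule.mem_sup.1 hFy
    obtain ⟨q, hq, rfl⟩ := Ideal.mem_span_singleton_mul.1 hv
    obtain ⟨G, hG, rfl⟩ := (Ideal.mem_span_pow_iff_exists_isHomogeneous _ _).1 hq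
    refine hyw ⟨k, F, G, hF, hG, mt map_residue_eq_zero_iff.1 hF0, ?_⟩
    rwa [← huv, mul_comm w, add_sub_cancel_right, add_assoc 1 k]

lemma mem_sup_of_isFractionMul (ha : IsQuasiRegularParameters a)
    (hI : Ideal.span (Set.range a) ≤ I) {i : ℕ} {x y : A}
    (hx : ∀ r ∈ maximalIdeal A, r * x ∈ I) (hx' : x ∉ I) (h : IsFractionMul a I 0 i x y) :
    y ∈ I * Ideal.span (Set.range a) ^ i ⊔ Ideal.span {x} * Ideal.span (Set.range a) ^ i := by
  have hpow : I * Ideal.span (Set.range a) ^ 0 = I := by rw [pow_zero, mul_one]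
  rw [← hpow] at hx hx'
  obtain ⟨k, hk, F, G, z, hF, hG, hF0, hyz, hxz⟩ := ha.exists_lowest_terms hI hx hx' h
  obtain rfl : k = 0 := Nat.le_zero.1 hk
  have := mem_sup_of_sub_mul_mem (isUnit_eval_of_isHomogeneous_zero hF hF0)
    (eval_mem_span_range_pow hG) (by simpa using hyz) hxz
  simpa using this

end IsQuasiRegularParameters

end Socle

section AdaptedGenerators

open Matrix

variable {A : Type*} [CommRing A] {ι κ : Type*} [Fintype ι]

lemma dotProduct_mem_mul {J : Ideal A} {a u : ι → A} (hu : ∀ i, u i ∈ J) :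
    u ⬝ᵥ a ∈ J * Ideal.span (Set.range a) :=
  sum_mem fun i _ => Ideal.mul_mem_mul (hu i) (Ideal.subset_span ⟨i, rfl⟩)

variable [IsLocalRing A]

/-- The vectors over the residue field that are the coefficient vectors, in the generators `a`,
of elements of `L` modulo `𝔪 (a)`. -/
def coeffSubspace (a : ι → A) (L : Ideal A) : Submodule (ResidueField A) (ι → ResidueField A) where
  carrier := {v | ∃ u : ι → A, residue A ∘ u = v ∧ u ⬝ᵥ a ∈ L}
  add_mem' := by
    rintro _ _ ⟨u, rfl, hu⟩ ⟨v, rfl, hv⟩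
    exact ⟨u + v, funext fun _ => map_add _ _ _, add_dotProduct u v a ▸ add_mem hu hv⟩
  zero_mem' := ⟨0, funext fun _ => map_zero _, by simp⟩
  smul_mem' := by
    rintro s _ ⟨u, rfl, hu⟩
    obtain ⟨r, rfl⟩ := residue_surjective s
    exact ⟨r • u, funext fun _ => map_mul _ _ _, smul_dotProduct r u a ▸ L.mul_mem_left r hu⟩

lemma dotProduct_mem_span_sup [Finite κ] (u : Matrix κ ι A) (a : ι → A) {c : ι → A}
    (hc : residue A ∘ c ∈
      Submodule.span (ResidueField A) (Set.range fun j => residue A ∘ u j)) :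
    c ⬝ᵥ a ∈ Ideal.span (Set.range (u *ᵥ a)) ⊔ maximalIdeal A * Ideal.span (Set.range a) := by
  cases nonempty_fintype κ
  obtain ⟨s, hs⟩ := (Submodule.mem_span_range_iff_exists_fun _).1 hc
  obtain ⟨t, rfl⟩ := residue_surjective.comp_left s
  have hres : ∀ i, (c - t ᵥ* u) i ∈ maximalIdeal A := fun i => by
    rw [← residue_eq_zero_iff, Pi.sub_apply, map_sub, sub_eq_zero]
    simpa [vecMul, dotProduct] using (congrFun hs i).symm
  rw [← sub_add_cancel c (t ᵥ* u), add_dotProduct, ← dotProduct_mulVec, add_comm]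
  refine Submodule.add_mem_sup ?_ (dotProduct_mem_mul hres)
  exact sum_mem fun j _ => Ideal.mul_mem_left _ _ (Ideal.subset_span ⟨j, rfl⟩)

lemma exists_matrix_span_residue_eq {ι : Type*} [Finite ι]
    (V : Submodule (ResidueField A) (ι → ResidueField A)) :
    ∃ u : Matrix (Fin (Module.finrank (ResidueField A) V)) ι A,
      Submodule.span (ResidueField A) (Set.range fun j => residue A ∘ u j) = V := by
  choose u hu using fun j =>
    residue_surjective.comp_left (Module.finBasis (ResidueField A) V j : ι → ResidueField A)
  refine ⟨u, ?_⟩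
  have := (Module.finBasis (ResidueField A) V).span_eq
  apply_fun Submodule.map V.subtype at this
  rwa [Submodule.map_span, ← Set.range_comp, Submodule.map_top, Submodule.range_subtype,
    show V.subtype ∘ Module.finBasis (ResidueField A) V = fun j => residue A ∘ u j from
      funext fun j => (hu j).symm] at this

lemma span_range_mulVec_eq [Finite κ] {u : Matrix κ ι A} (a : ι → A)
    (hu : Submodule.span (ResidueField A) (Set.range fun j => residue A ∘ u j) = ⊤) :
    Ideal.span (Set.range (u *ᵥ a)) = Ideal.span (Set.range a) := by
  classical
  apply le_antisymm
  · rw [Ideal.span_le]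
    rintro _ ⟨j, rfl⟩
    exact sum_mem fun i _ => Ideal.mul_mem_left _ _ (Ideal.subset_span ⟨i, rfl⟩)
  · refine Submodule.le_of_le_smul_of_le_jacobson_bot
      (Submodule.fg_span (Set.finite_range a)) (maximalIdeal_le_jacobson ⊥) (Ideal.span_le.2 ?_)
    rintro _ ⟨i, rfl⟩
    rw [← single_one_dotProduct i a]
    exact dotProduct_mem_span_sup u a (hu ▸ Submodule.mem_top)

lemma exists_adapted_generators (a : ι → A) {L : Ideal A}
    (hmL : maximalIdeal A * Ideal.span (Set.range a) ≤ L) (hL : L ≤ Ideal.span (Set.range a)) :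
    ∃ (p q : ℕ) (b : Fin p ⊕ Fin q → A), p + q = Fintype.card ι ∧
      Ideal.span (Set.range b) = Ideal.span (Set.range a) ∧
      L = Ideal.span (Set.range (b ∘ Sum.inl)) ⊔ maximalIdeal A * Ideal.span (Set.range a) := by
  obtain ⟨W, hVW⟩ := Submodule.exists_isCompl (coeffSubspace a L)
  obtain ⟨u, hu⟩ := exists_matrix_span_residue_eq (coeffSubspace a L)
  obtain ⟨v, hv⟩ := exists_matrix_span_residue_eq W
  refine ⟨_, _, Matrix.fromRows u v *ᵥ a, ?_, span_range_mulVec_eq a ?_, le_antisymm ?_ ?_⟩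
  · rw [Submodule.finrank_add_eq_of_isCompl hVW, Module.finrank_fintype_fun_eq_card]
  · rw [← hVW.sup_eq_top, ← congrArg₂ (· ⊔ ·) hu hv, ← Submodule.span_union,
      ← Set.Sum.elim_range]
    congr 2
    ext (j | j) <;> rfl
  · rw [fromRows_mulVec, Sum.elim_comp_inl]
    intro x hx
    obtain ⟨c, rfl⟩ := Ideal.mem_span_range_iff_exists_fun.1 (hL hx)
    exact dotProduct_mem_span_sup u a (hu.ge ⟨c, rfl, hx⟩)
  · rw [fromRows_mulVec, Sum.elim_comp_inl]
    refine sup_le (Ideal.span_le.2 ?_) hmL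
    rintro _ ⟨j, rfl⟩
    obtain ⟨c, hc, hcL⟩ : residue A ∘ u j ∈ coeffSubspace a L :=
      hu.le (Submodule.subset_span ⟨j, rfl⟩)
    have hsub : (u j - c) ⬝ᵥ a ∈ L := hmL <| dotProduct_mem_mul fun i => by
      rw [← residue_eq_zero_iff, Pi.sub_apply, map_sub, sub_eq_zero]
      exact (congrFun hc i).symm
    rw [sub_dotProduct] at hsub
    exact (Submodule.sub_mem_iff_left L hcL).1 hsub

end AdaptedGenerators

section Colengths

open MvPolynomial

variable {A : Type*} [CommRing A]

lemma sup_pow_succ_le (P R : Ideal A) (k : ℕ) :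
    (P ⊔ R) ^ (k + 1) ≤ P * (P ⊔ R) ^ k ⊔ R ^ (k + 1) := by
  induction k with
  | zero => simp
  | succ k ih =>
    have hPR : R ^ (k + 1) * P ≤ P * (P ⊔ R) ^ (k + 1) := by
      rw [mul_comm]
      exact Ideal.mul_mono_right (Ideal.pow_right_mono le_sup_right _)
    calc (P ⊔ R) ^ (k + 1 + 1) = (P ⊔ R) ^ (k + 1) * (P ⊔ R) := pow_succ _ _
      _ ≤ (P * (P ⊔ R) ^ k ⊔ R ^ (k + 1)) * (P ⊔ R) := Ideal.mul_mono_left ih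
      _ = P * (P ⊔ R) ^ (k + 1) ⊔ (R ^ (k + 1) * P ⊔ R ^ (k + 1 + 1)) := by
        rw [Ideal.sup_mul, mul_assoc, ← pow_succ, Ideal.mul_sup (I := R ^ (k + 1)), ← pow_succ]
      _ ≤ _ := sup_le le_sup_left (sup_le (hPR.trans le_sup_left) le_sup_right)

lemma mem_map_C_of_rename_sub_mem {p q : Type*} [Fintype p] {J : Ideal A} {G : MvPolynomial q A}
    {T : p → MvPolynomial (p ⊕ q) A}
    (h : rename Sum.inr G - ∑ j, X (Sum.inl j) * T j ∈ J.map C) : G ∈ J.map C := by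
  let killInl : MvPolynomial (p ⊕ q) A →ₐ[A] MvPolynomial q A := bind₁ (Sum.elim 0 X)
  have hG : killInl (rename Sum.inr G - ∑ j, X (Sum.inl j) * T j) = G := by
    simp [killInl, bind₁_rename, Sum.elim_comp_inr, bind₁_X_left]
  have hC : killInl.toRingHom.comp C = C := RingHom.ext fun r => aeval_C _ r
  have := Ideal.mem_map_of_mem killInl.toRingHom h
  rwa [Ideal.map_map, hC, AlgHom.toRingHom_eq_coe, RingHom.coe_coe, hG] at this

lemma exists_eval_eq_of_mem_span_mul {ι κ : Type*} [Fintype κ] {b : ι → A} {f : κ → ι} {k : ℕ}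
    {t : A} (ht : t ∈ Ideal.span (Set.range (b ∘ f)) * Ideal.span (Set.range b) ^ k) :
    ∃ T : κ → MvPolynomial ι A, (∀ j, (T j).IsHomogeneous k) ∧
      eval b (∑ j, X (f j) * T j) = t := by
  induction ht using Submodule.mul_induction_on' with
  | mem_mul_mem x hx y hy =>
    obtain ⟨c, rfl⟩ := Ideal.mem_span_range_iff_exists_fun.1 hx
    obtain ⟨F, hF, rfl⟩ := Ideal.mem_span_pow_iff_exists_isHomogeneous _ _ |>.1 hy
    refine ⟨fun j => C (c j) * F, fun j => hF.C_mul _, ?_⟩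
    simp only [map_sum, map_mul, eval_X, eval_C, Finset.sum_mul, Function.comp_apply]
    exact Finset.sum_congr rfl fun j _ => by ring
  | add x _ y _ hx hy =>
    obtain ⟨⟨S, hS, rfl⟩, T, hT, rfl⟩ := And.intro hx hy
    refine ⟨S + T, fun j => (hS j).add (hT j), ?_⟩
    simp only [Pi.add_apply, mul_add, Finset.sum_add_distrib, map_add]

lemma span_range_inl_sup_span_range_inr {p q : Type*} (b : p ⊕ q → A) :
    Ideal.span (Set.range (b ∘ Sum.inl)) ⊔ Ideal.span (Set.range (b ∘ Sum.inr)) =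
      Ideal.span (Set.range b) := by
  rw [← Ideal.span_union, ← Sum.range_eq]

variable [IsLocalRing A] [IsNoetherianRing A]

namespace IsQuasiRegularParameters

variable {p q : Type*} {b : p ⊕ q → A} {I : Ideal A} {z : A} {k : ℕ}

lemma eval_inr_mul_mem_iff [Finite p] (hb : IsQuasiRegularParameters b)
    (hI : Ideal.span (Set.range b) ≤ I) (hz : z ∉ I) (hmz : ∀ r ∈ maximalIdeal A, r * z ∈ I)
    {G : MvPolynomial q A} (hG : G.IsHomogeneous (k + 1)) :
    eval (b ∘ Sum.inr) G * z ∈ I * Ideal.span (Set.range b) ^ (k + 1) ⊔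
        Ideal.span {z} * (Ideal.span (Set.range (b ∘ Sum.inl)) * Ideal.span (Set.range b) ^ k) ↔
      G ∈ (maximalIdeal A).map C := by
  cases nonempty_fintype p
  have mem_iff : ∀ F : MvPolynomial (p ⊕ q) A, F.IsHomogeneous (k + 1) →
      (eval b F * z ∈ I * Ideal.span (Set.range b) ^ (k + 1) ↔ F ∈ (maximalIdeal A).map C) := by
    intro F hF
    simpa only [zero_add] using hb.eval_mul_mem_iff (m := 0) hI (by simpa using hz)
      (by simpa using hmz) hF
  refine ⟨fun hGz => ?_, fun hGm => Ideal.mem_sup_left ?_⟩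
  · obtain ⟨u, hu, v, hv, huv⟩ := Submodule.mem_sup.1 hGz
    obtain ⟨t, ht, rfl⟩ := Ideal.mem_span_singleton_mul.1 hv
    obtain ⟨T, hT, rfl⟩ := exists_eval_eq_of_mem_span_mul ht
    refine mem_map_C_of_rename_sub_mem ((mem_iff (rename Sum.inr G - ∑ j, X (Sum.inl j) * T j)
      (hG.rename_isHomogeneous.sub (IsHomogeneous.sum _ _ _ fun j _ => ?_))).1 ?_)
    · exact add_comm k 1 ▸ (isHomogeneous_X _ _).mul (hT j)
    · rwa [map_sub, eval_rename, sub_mul, ← huv, mul_comm z, add_sub_cancel_right]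
  · rw [← eval_rename]
    exact (mem_iff _ hG.rename_isHomogeneous).2 (rename_mem_map_C _ hGm)

lemma length_quotient_mul_pow_add_multichoose [Fintype p] [Fintype q]
    (hb : IsQuasiRegularParameters b) (hI : Ideal.span (Set.range b) ≤ I) (hz : z ∉ I)
    (hmz : ∀ r ∈ maximalIdeal A, r * z ∈ I) (k : ℕ) :
    Module.length A (A ⧸ I * Ideal.span (Set.range b) ^ (k + 1)) +
        (Fintype.card q).multichoose (k + 1) =
      Module.length A (A ⧸ I * Ideal.span (Set.range b) ^ (k + 1) ⊔ Ideal.span {z} *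
          (Ideal.span (Set.range (b ∘ Sum.inl)) * Ideal.span (Set.range b) ^ k)) +
        (Fintype.card (p ⊕ q)).multichoose (k + 1) := by
  have hfull := hb.length_quotient_mul_pow_eq (m := 0) hI (by simpa using hz) (by simpa using hmz)
    (k + 1)
  rw [zero_add] at hfull
  have hsup := span_range_inl_sup_span_range_inr b
  rw [hfull, length_eq_multichoose_mul_add (b ∘ Sum.inr) (k + 1) z
    fun G hG => hb.eval_inr_mul_mem_iff hI hz hmz hG, length_quotient_maximalIdeal, mul_one,
    sup_assoc, ← Ideal.mul_sup]
  set P := Ideal.span (Set.range (b ∘ Sum.inl))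
  set R := Ideal.span (Set.range (b ∘ Sum.inr))
  rw [← hsup, show P * (P ⊔ R) ^ k ⊔ R ^ (k + 1) = (P ⊔ R) ^ (k + 1) from
    (sup_le (pow_succ' (P ⊔ R) k ▸ Ideal.mul_mono_left le_sup_left)
      (Ideal.pow_right_mono le_sup_right _)).antisymm (sup_pow_succ_le P R k)]
  ring

end IsQuasiRegularParameters

open RingTheory.Sequence in
lemma IsQuasiRegularParameters.of_isRegular {κ : Type*} [Fintype κ] {rs : List A}
    (hrs : ∀ r ∈ rs, r ∈ maximalIdeal A) (h : IsRegular A rs) (hlen : rs.length = Fintype.card κ)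
    {b : κ → A} (hb : ∀ i, b i ∈ maximalIdeal A)
    (hrad : maximalIdeal A ≤ (Ideal.span (Set.range b)).radical) :
    IsQuasiRegularParameters b := by
  refine ⟨fun n F hF he => ?_, hrad⟩
  set σ := Fintype.equivFin κ
  have hrange : Set.range (b ∘ σ.symm) = Set.range b := σ.symm.surjective.range_comp b
  have hbσ : IsQuasiRegular (b ∘ σ.symm) :=
    .of_isWeaklyRegular <| isWeaklyRegular_of_maximalIdeal_le_radical hrs h
      (by rw [List.length_ofFn, hlen]) (by simpa [List.mem_ofFn] using fun i => hb (σ.symm i))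
      (by rw [ideal_ofList_ofFn, hrange]; exact hrad.trans (Ideal.radical_mono le_sup_right))
  have hmem := rename_mem_map_C σ.symm <| hbσ n (rename σ F) hF.rename_isHomogeneous <| by
    rwa [eval_rename, Function.comp_assoc, σ.symm_comp_self, Function.comp_id]
  rwa [rename_rename, σ.symm_comp_self, rename_id_apply, hrange] at hmem

end Colengths

section SallyModule

variable {A : Type*} [CommRing A]

section PowersOfI

variable {I Q : Ideal A}

lemma pow_add_two_eq_of_pow_three_le (hQI : Q ≤ I) (h : I ^ 3 ≤ I ^ 2 * Q) (k : ℕ) :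
    I ^ (k + 2) = I ^ 2 * Q ^ k := by
  induction k with
  | zero => simp
  | succ k ih =>
    apply le_antisymm
    · calc I ^ (k + 1 + 2) = I ^ (k + 2) * I := pow_succ _ _
        _ = I ^ 3 * Q ^ k := by rw [ih]; ring
        _ ≤ I ^ 2 * Q * Q ^ k := Ideal.mul_mono_left h
        _ = I ^ 2 * Q ^ (k + 1) := by ring
    · calc I ^ 2 * Q ^ (k + 1) ≤ I ^ 2 * I ^ (k + 1) :=
            Ideal.mul_mono_right (Ideal.pow_right_mono hQI _)
        _ = I ^ (k + 1 + 2) := by ring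

lemma pow_succ_eq_mul_pow_of_sq_le (hQI : Q ≤ I) (h : I ^ 2 ≤ I * Q) (n : ℕ) :
    I ^ (n + 1) = I * Q ^ n := by
  refine le_antisymm ?_ (mul_pow_le_pow_succ hQI n)
  induction n with
  | zero => simp
  | succ n ih =>
    calc I ^ (n + 1 + 1) = I ^ (n + 1) * I := pow_succ _ _
      _ ≤ I * Q ^ n * I := Ideal.mul_mono_left ih
      _ = I ^ 2 * Q ^ n := by ring
      _ ≤ I * Q * Q ^ n := Ideal.mul_mono_left h
      _ = I * Q ^ (n + 1) := by ring

variable {z : A}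

lemma sq_eq_mul_sup_span_singleton_mul (hQI : Q ≤ I)
    (h : I * I ≤ (I ⊔ Ideal.span {z}) * Q) :
    I ^ 2 = I * Q ⊔ Ideal.span {z} * (Q ⊓ (I ^ 2).colon {z}) := by
  have hIQ : I * Q ≤ I ^ 2 := sq I ▸ Ideal.mul_mono_right hQI
  refine le_antisymm (fun x hx => ?_)
    (sup_le hIQ (Ideal.span_singleton_mul_le_iff.2 fun l hl => ?_))
  · rw [Ideal.sup_mul, ← sq] at h
    obtain ⟨u, hu, v, hv, rfl⟩ := Submodule.mem_sup.1 (h hx)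
    obtain ⟨l, hl, rfl⟩ := Ideal.mem_span_singleton_mul.1 hv
    refine Submodule.add_mem_sup hu (Ideal.mul_mem_mul (Ideal.mem_span_singleton_self z)
      ⟨hl, Submodule.mem_colon_singleton.2 ?_⟩)
    have := sub_mem hx (hIQ hu)
    rwa [add_sub_cancel_left, mul_comm] at this
  · rw [mul_comm]
    exact Submodule.mem_colon_singleton.1 hl.2

lemma pow_three_le_sq_mul (hQI : Q ≤ I)
    (h : I * (I ⊔ Ideal.span {z}) ≤ (I ⊔ Ideal.span {z}) * Q) : I ^ 3 ≤ I ^ 2 * Q := by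
  have hIQ : I * Q ≤ I ^ 2 := sq I ▸ Ideal.mul_mono_right hQI
  have hsq := sq_eq_mul_sup_span_singleton_mul hQI ((Ideal.mul_mono_right le_sup_left).trans h)
  set L := Q ⊓ (I ^ 2).colon {z}
  have hzL : (I ⊔ Ideal.span {z}) * L ≤ I ^ 2 := by
    rw [Ideal.sup_mul]
    exact sup_le ((Ideal.mul_mono_right inf_le_left).trans hIQ) (hsq ▸ le_sup_right)
  calc I ^ 3 = I * I ^ 2 := by ring
    _ = I * I * Q ⊔ I * Ideal.span {z} * L := by
      conv_lhs => rw [hsq]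
      rw [Ideal.mul_sup, mul_assoc, mul_assoc]
    _ ≤ I ^ 2 * Q ⊔ (I ⊔ Ideal.span {z}) * Q * L :=
      sup_le_sup (sq I ▸ le_rfl)
        (Ideal.mul_mono_left ((Ideal.mul_mono_right le_sup_right).trans h))
    _ = I ^ 2 * Q ⊔ (I ⊔ Ideal.span {z}) * L * Q := by rw [mul_right_comm]
    _ ≤ I ^ 2 * Q := sup_le le_rfl (Ideal.mul_mono_left hzL)

lemma pow_add_two_eq_mul_sup {P K : Ideal A} (hQI : Q ≤ I)
    (h : I * (I ⊔ Ideal.span {z}) ≤ (I ⊔ Ideal.span {z}) * Q) (hK : ∀ r ∈ K, r * z ∈ I)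
    (hP : Q ⊓ (I ^ 2).colon {z} = P ⊔ K * Q) (k : ℕ) :
    I ^ (k + 2) = I * Q ^ (k + 1) ⊔ Ideal.span {z} * (P * Q ^ k) := by
  have hzK : Ideal.span {z} * (K * Q) ≤ I * Q := by
    rw [← mul_assoc]
    exact Ideal.mul_mono_left (Ideal.span_singleton_mul_le_iff.2 fun r hr => mul_comm r z ▸ hK r hr)
  have hsq : I ^ 2 = I * Q ⊔ Ideal.span {z} * P := by
    rw [sq_eq_mul_sup_span_singleton_mul hQI
      ((Ideal.mul_mono_right le_sup_left).trans h), hP, Ideal.mul_sup (J := P),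
      sup_left_comm, sup_eq_left.2 hzK, sup_comm]
  rw [pow_add_two_eq_of_pow_three_le hQI (pow_three_le_sq_mul hQI h), hsq, Ideal.sup_mul]
  congr 1 <;> ring

end PowersOfI

open MvPolynomial

variable [IsLocalRing A] [IsNoetherianRing A] {ι : Type*} {a : ι → A} {I : Ideal A} {w : A}

namespace IsQuasiRegularParameters

lemma exists_isHomogeneous_one_sub_eval_mul_mem (ha : IsQuasiRegularParameters a)
    (hI : Ideal.span (Set.range a) ≤ I) (hw : w ∉ I * Ideal.span (Set.range a))
    (hmw : ∀ r ∈ maximalIdeal A, r * w ∈ I * Ideal.span (Set.range a)) {i : ℕ} {y : A}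
    (hy : y ∉ I * Ideal.span (Set.range a) ^ (1 + i) ⊔
      Ideal.span {w} * Ideal.span (Set.range a) ^ i)
    (h : IsFractionMul a I 1 i w y) :
    ∃ (F : MvPolynomial ι A) (z : A), F.IsHomogeneous 1 ∧ map (residue A) F ≠ 0 ∧
      w - eval a F * z ∈ I * Ideal.span (Set.range a) := by
  rw [← pow_one (Ideal.span (Set.range a))] at hw hmw ⊢
  obtain ⟨k, hk, F, G, z, hF, hG, hF0, hyz, hwz⟩ := ha.exists_lowest_terms hI hmw hw h
  rw [pow_one] at hwz ⊢
  rcases Nat.le_one_iff_eq_zero_or_eq_one.1 hk with rfl | rfl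
  · rw [zero_add] at hG
    exact absurd (mem_sup_of_sub_mul_mem (isUnit_eval_of_isHomogeneous_zero hF hF0)
      (eval_mem_span_range_pow hG) hyz (by rwa [pow_one])) hy
  · exact ⟨F, z, hF, hF0, hwz⟩

section Linear

variable {F : MvPolynomial ι A} {z : A}

lemma mul_mem_of_sub_eval_mul_mem (ha : IsQuasiRegularParameters a)
    (hI : Ideal.span (Set.range a) ≤ I)
    (hmw : ∀ r ∈ maximalIdeal A, r * w ∈ I * Ideal.span (Set.range a)) (hF : F.IsHomogeneous 1)
    (hF0 : map (residue A) F ≠ 0) (hwz : w - eval a F * z ∈ I * Ideal.span (Set.range a)) :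
    ∀ r ∈ maximalIdeal A, r * z ∈ I := by
  intro r hr
  have hFrz : eval a F * (r * z) ∈ I * Ideal.span (Set.range a) ^ (0 + 1) := by
    rw [zero_add, pow_one]
    convert sub_mem (hmw r hr) (Ideal.mul_mem_left _ r hwz) using 1
    ring
  simpa using ha.mem_of_eval_mul_mem hI hF hF0 hFrz

lemma mul_sup_span_singleton_le (ha : IsQuasiRegularParameters a)
    (hI : Ideal.span (Set.range a) ≤ I) (hwI : w ∈ I ^ 2) (hz : z ∉ I)
    (hmz : ∀ r ∈ maximalIdeal A, r * z ∈ I) (hF : F.IsHomogeneous 1)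
    (hF0 : map (residue A) F ≠ 0) (hwz : w - eval a F * z ∈ I * Ideal.span (Set.range a))
    (hrank : ∀ i, ∀ y ∈ I ^ (i + 2), IsFractionMul a I 1 i w y) :
    I * (I ⊔ Ideal.span {z}) ≤ (I ⊔ Ideal.span {z}) * Ideal.span (Set.range a) := by
  set Q := Ideal.span (Set.range a)
  have hpow : ∀ j, I ^ (j + 2) ≤ (I ⊔ Ideal.span {z}) * Q ^ (j + 1) := by
    intro j y hy
    rw [Ideal.sup_mul]
    exact ha.mem_sup_of_isFractionMul hI hmz hz
      ((hrank j y hy).of_sub_eval_mul_mem (n := 0) (l := 1) hF (by simpa using hwz))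
  have hI2 : I ^ 2 ≤ (I ⊔ Ideal.span {z}) * Q := by simpa using hpow 0
  rw [Ideal.mul_sup, ← sq, mul_comm I (Ideal.span {z})]
  refine sup_le hI2 (Ideal.span_singleton_mul_le_iff.2 fun x hx => ?_)
  have hxw : x * w ∈ (I ⊔ Ideal.span {z}) * Q ^ 2 :=
    hpow 1 (pow_succ' I 2 ▸ Ideal.mul_mem_mul hx hwI)
  have hxwz : x * (w - eval a F * z) ∈ (I ⊔ Ideal.span {z}) * Q ^ 2 := by
    have hle : I * (I * Q) ≤ (I ⊔ Ideal.span {z}) * Q ^ 2 := by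
      rw [← mul_assoc, ← sq, sq Q, ← mul_assoc]
      exact Ideal.mul_mono_left hI2
    exact hle (Ideal.mul_mem_mul hx hwz)
  have hFzx : eval a F * (z * x) ∈ (I ⊔ Ideal.span {z}) * Q ^ (1 + 1) := by
    convert sub_mem hxw hxwz using 1
    ring
  simpa using ha.mem_of_eval_mul_mem (hI.trans le_sup_left) hF hF0 hFzx

end Linear

lemma exists_mul_sup_span_singleton_le (ha : IsQuasiRegularParameters a)
    (hI : Ideal.span (Set.range a) ≤ I) (hwI : w ∈ I ^ 2)
    (hw : w ∉ I * Ideal.span (Set.range a))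
    (hmw : ∀ r ∈ maximalIdeal A, r * w ∈ I * Ideal.span (Set.range a))
    (hrank : ∀ i, ∀ y ∈ I ^ (i + 2), IsFractionMul a I 1 i w y)
    (hnot : ¬ ∀ i, I ^ (i + 2) ≤
      I * Ideal.span (Set.range a) ^ (1 + i) ⊔ Ideal.span {w} * Ideal.span (Set.range a) ^ i) :
    ∃ z ∉ I, (∀ r ∈ maximalIdeal A, r * z ∈ I) ∧
      I * (I ⊔ Ideal.span {z}) ≤ (I ⊔ Ideal.span {z}) * Ideal.span (Set.range a) := by
  obtain ⟨i, hi⟩ := not_forall.1 hnot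
  obtain ⟨y, hy, hy'⟩ := SetLike.not_le_iff_exists.1 hi
  obtain ⟨F, z, hF, hF0, hwz⟩ :=
    ha.exists_isHomogeneous_one_sub_eval_mul_mem hI hw hmw hy' (hrank i y hy)
  have hFQ : eval a F ∈ Ideal.span (Set.range a) := by
    simpa using eval_mem_span_range_pow (a := a) hF
  have hz : z ∉ I := fun hz => hw <|
    (Submodule.sub_mem_iff_left _ (mul_comm z _ ▸ Ideal.mul_mem_mul hz hFQ)).1 hwz
  have hmz := ha.mul_mem_of_sub_eval_mul_mem hI hmw hF hF0 hwz
  exact ⟨z, hz, hmz, ha.mul_sup_span_singleton_le hI hwI hz hmz hF hF0 hwz hrank⟩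

variable [Fintype ι]

lemma length_quotient_mul_pow_of_le_sup (ha : IsQuasiRegularParameters a)
    (hI : Ideal.span (Set.range a) ≤ I) (hwI : w ∈ I ^ 2)
    (hw : w ∉ I * Ideal.span (Set.range a))
    (hmw : ∀ r ∈ maximalIdeal A, r * w ∈ I * Ideal.span (Set.range a)) {i : ℕ}
    (h : I ^ (i + 2) ≤
      I * Ideal.span (Set.range a) ^ (1 + i) ⊔ Ideal.span {w} * Ideal.span (Set.range a) ^ i) :
    Module.length A (A ⧸ I * Ideal.span (Set.range a) ^ (1 + i)) =
      (Fintype.card ι).multichoose i + Module.length A (A ⧸ I ^ (i + 2)) := by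
  have hle : I * Ideal.span (Set.range a) ^ (1 + i) ≤ I ^ (i + 2) := by
    rw [show i + 2 = 1 + i + 1 by ring]
    exact mul_pow_le_pow_succ hI _
  rw [← pow_one (Ideal.span (Set.range a))] at hw hmw
  rw [ha.length_quotient_mul_pow_eq hI hw hmw,
    h.antisymm (sup_le hle (span_singleton_mul_pow_le_pow_add hI hwI i))]

lemma exists_length_quotient_mul_pow_of_mul_sup_le (ha : IsQuasiRegularParameters a)
    {rs : List A} (hrs : ∀ r ∈ rs, r ∈ maximalIdeal A)
    (hreg : RingTheory.Sequence.IsRegular A rs) (hlen : rs.length = Fintype.card ι)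
    (hI : Ideal.span (Set.range a) ≤ I) (hIm : I ≤ maximalIdeal A)
    (hI2 : ¬ I ^ 2 ≤ I * Ideal.span (Set.range a)) {z : A} (hz : z ∉ I)
    (hmz : ∀ r ∈ maximalIdeal A, r * z ∈ I)
    (h : I * (I ⊔ Ideal.span {z}) ≤ (I ⊔ Ideal.span {z}) * Ideal.span (Set.range a)) :
    ∃ c, 0 < c ∧ c ≤ Fintype.card ι ∧ ∀ n,
      Module.length A (A ⧸ I * Ideal.span (Set.range a) ^ (n + 1)) +
          (Fintype.card ι - c).multichoose (n + 1) =
        Module.length A (A ⧸ I ^ (n + 2)) + (Fintype.card ι).multichoose (n + 1) := by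
  have hmL : maximalIdeal A * Ideal.span (Set.range a) ≤
      Ideal.span (Set.range a) ⊓ (I ^ 2).colon {z} := by
    refine le_inf Ideal.mul_le_right (Ideal.mul_le.2 fun r hr q hq => ?_)
    rw [Submodule.mem_colon_singleton, smul_eq_mul, mul_right_comm, sq]
    exact Ideal.mul_mem_mul (hmz r hr) (hI hq)
  obtain ⟨p, q, b, hpq, hbQ, hL⟩ := exists_adapted_generators a hmL inf_le_left
  have hpow := pow_add_two_eq_mul_sup hI h hmz hL
  rw [← hbQ] at hI hI2 hpow ⊢
  have hcard : Fintype.card (Fin p ⊕ Fin q) = Fintype.card ι := by simpa using hpq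
  have hb : IsQuasiRegularParameters b :=
    .of_isRegular hrs hreg (hlen.trans hcard.symm)
      (fun i => hIm (hI (Ideal.subset_span ⟨i, rfl⟩))) (hbQ ▸ ha.maximalIdeal_le_radical)
  have hp : p ≠ 0 := by
    rintro rfl
    refine hI2 (le_of_eq ?_)
    simpa using hpow 0
  refine ⟨p, Nat.pos_of_ne_zero hp, by omega, fun n => ?_⟩
  have hlength := hb.length_quotient_mul_pow_add_multichoose hI hz hmz n
  rw [← hpow n, hcard, Fintype.card_fin] at hlength
  rwa [show Fintype.card ι - p = q by omega]

lemma exists_length_quotient_mul_pow [Nonempty ι] (ha : IsQuasiRegularParameters a)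
    {rs : List A} (hrs : ∀ r ∈ rs, r ∈ maximalIdeal A)
    (hreg : RingTheory.Sequence.IsRegular A rs) (hlen : rs.length = Fintype.card ι)
    (hI : Ideal.span (Set.range a) ≤ I) (hIm : I ≤ maximalIdeal A)
    (hI2 : ¬ I ^ 2 ≤ I * Ideal.span (Set.range a))
    (hrank : ∀ i, ∃ k, Module.length A (A ⧸ I * Ideal.span (Set.range a) ^ (1 + k + i)) <
      (Fintype.card ι).multichoose (k + i) + ((Fintype.card ι).multichoose k +
        Module.length A (A ⧸ I ^ (k + i + 2)))) :
    ∃ c, 0 < c ∧ c ≤ Fintype.card ι ∧ ∀ n,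
      Module.length A (A ⧸ I * Ideal.span (Set.range a) ^ (n + 1)) +
          (Fintype.card ι - c).multichoose (n + 1) =
        Module.length A (A ⧸ I ^ (n + 2)) + (Fintype.card ι).multichoose (n + 1) := by
  have hrad : maximalIdeal A ≤ (I * Ideal.span (Set.range a)).radical := by
    rw [Ideal.radical_mul]
    exact le_inf (ha.maximalIdeal_le_radical.trans (Ideal.radical_mono hI))
      ha.maximalIdeal_le_radical
  obtain ⟨w, hwI, hw, hmw'⟩ := exists_mem_notMem_mul_mem_iff hI2 hrad
  have hmw : ∀ r ∈ maximalIdeal A, r * w ∈ I * Ideal.span (Set.range a) :=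
    fun r => (hmw' r).2
  by_cases hfree : ∀ i, I ^ (i + 2) ≤
      I * Ideal.span (Set.range a) ^ (1 + i) ⊔ Ideal.span {w} * Ideal.span (Set.range a) ^ i
  · refine ⟨1, one_pos, Fintype.card_pos, fun n => ?_⟩
    obtain ⟨d, hd⟩ := Nat.exists_eq_add_of_le' (Fintype.card_pos (α := ι))
    rw [add_comm n 1, ha.length_quotient_mul_pow_of_le_sup hI hwI hw hmw (hfree n), hd,
      add_comm 1 n, Nat.multichoose_succ_succ, Nat.add_sub_cancel, Nat.cast_add]
    ring
  · have hfrac : ∀ i, ∀ y ∈ I ^ (i + 2), IsFractionMul a I 1 i w y := fun i y hy =>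
      (hrank i).elim fun k hk => ha.isFractionMul_of_length_quotient_lt hI hwI hw hmw hy hk
    obtain ⟨z, hz, hmz, h⟩ := ha.exists_mul_sup_span_singleton_le hI hwI hw hmw hfrac hfree
    exact ha.exists_length_quotient_mul_pow_of_mul_sup_le hrs hreg hlen hI hIm hI2 hz hmz h

end IsQuasiRegularParameters

end SallyModule

section Numerics

lemma multichoose_mono_left {p q : ℕ} (h : p ≤ q) (n : ℕ) :
    p.multichoose n ≤ q.multichoose n := by
  rw [Nat.multichoose_eq, Nat.multichoose_eq]
  exact Nat.choose_le_choose n (by omega)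

lemma multichoose_mono_right {p : ℕ} (hp : 1 ≤ p) : Monotone p.multichoose := by
  obtain ⟨p, rfl⟩ := Nat.exists_eq_add_of_le' hp
  refine monotone_nat_of_le_succ fun n => ?_
  rw [Nat.multichoose_succ_succ]
  omega

lemma multichoose_succ_eq_choose (p n : ℕ) : (p + 1).multichoose n = (n + p).choose p := by
  rw [Nat.multichoose_eq, Nat.choose_symm_of_eq_add (b := p) (by omega)]
  congr 1
  omega

lemma multichoose_eq_choose_pred {p : ℕ} (hp : 0 < p) (n : ℕ) :
    p.multichoose n = (n + p - 1).choose (p - 1) := by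
  obtain ⟨p, rfl⟩ := Nat.exists_eq_add_of_le' hp
  exact multichoose_succ_eq_choose p n

lemma multichoose_add_le (p n r : ℕ) :
    (p + 1).multichoose (n + r) ≤ (p + 1).multichoose n + r * p.multichoose (n + r) := by
  induction r with
  | zero => simp
  | succ r ih =>
    rw [← add_assoc, Nat.multichoose_succ_succ]
    have h : r * p.multichoose (n + r) ≤ r * p.multichoose (n + r + 1) := by
      rcases Nat.eq_zero_or_pos p with rfl | hp
      · rcases Nat.eq_zero_or_pos r with rfl | hr
        · simp
        · obtain ⟨t, rfl⟩ := Nat.exists_eq_add_of_le' hr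
          simp [← add_assoc]
      · exact Nat.mul_le_mul_left _ (multichoose_mono_right hp (Nat.le_succ _))
    have : (r + 1) * p.multichoose (n + r + 1) =
      r * p.multichoose (n + r + 1) + p.multichoose (n + r + 1) := by ring
    omega

lemma nonneg_of_multichoose {p : ℕ} {b B : ℤ} {N : ℕ}
    (h : ∀ n ≥ N, 0 ≤ b * (p + 1).multichoose n + B * p.multichoose n) : 0 ≤ b := by
  by_contra! hb
  rcases Nat.eq_zero_or_pos p with rfl | hp
  · have := h (N + 1) (by omega)
    simp at this
    omega
  · obtain ⟨p, rfl⟩ := Nat.exists_eq_add_of_le' hp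
    set n := N + (B * (p + 1)).toNat + 1
    have hBn : B * (p + 1) < n := by omega
    have hratio : (p + 1) * (p + 1 + 1).multichoose n = (n + p + 1) * (p + 1).multichoose n := by
      rw [multichoose_succ_eq_choose, multichoose_succ_eq_choose, mul_comm]
      exact (Nat.add_one_mul_choose_eq (n + p) p).symm
    have hpos : 0 < (p + 1).multichoose n := by
      rw [multichoose_succ_eq_choose]
      exact Nat.choose_pos (by omega)
    zify at hratio hpos
    have hfactor : ((p : ℤ) + 1) * (b * (p + 1 + 1).multichoose n + B * (p + 1).multichoose n) =
        (b * (n + p + 1) + B * (p + 1)) * (p + 1).multichoose n := by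
      linear_combination b * hratio
    have hcoeff : 0 ≤ b * (n + p + 1) + B * (p + 1) :=
      nonneg_of_mul_nonneg_left (hfactor ▸ mul_nonneg (by omega) (h n (by omega))) hpos
    nlinarith

lemma abs_sum_multichoose_le (b : ℕ → ℤ) (d t n : ℕ) :
    |∑ i ∈ Finset.Ico t (d + 1), b i * ((d - i + 1).multichoose n : ℤ)| ≤
      (∑ i ∈ Finset.Ico t (d + 1), |b i|) * ((d + 1 - t).multichoose n : ℤ) := by
  rw [Finset.sum_mul]
  refine (Finset.abs_sum_le_sum_abs _ _).trans (Finset.sum_le_sum fun i hi => ?_)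
  rw [Finset.mem_Ico] at hi
  rw [abs_mul, Nat.abs_cast]
  gcongr
  exact multichoose_mono_left (by omega) n

lemma eq_zero_of_sum_multichoose_eq_zero {b : ℕ → ℤ} {d N : ℕ}
    (h : ∀ n ≥ N, ∑ i ∈ Finset.range (d + 1), b i * ((d - i + 1).multichoose n : ℤ) = 0) :
    ∀ i ≤ d, b i = 0 := by
  intro i
  induction i using Nat.strong_induction_on with
  | _ i ih =>
  intro hi
  have key : ∀ n ≥ N, b i * ((d - i + 1).multichoose n : ℤ) +
      ∑ j ∈ Finset.Ico (i + 1) (d + 1), b j * ((d - j + 1).multichoose n : ℤ) = 0 := by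
    intro n hn
    rw [← h n hn, Finset.range_eq_Ico,
      ← Finset.sum_Ico_consecutive _ (Nat.zero_le i) (show i ≤ d + 1 by omega),
      Finset.sum_eq_sum_Ico_succ_bot (show i < d + 1 by omega),
      Finset.sum_eq_zero (s := Finset.Ico 0 i), zero_add]
    intro j hj
    rw [Finset.mem_Ico] at hj
    rw [ih j hj.2 (by omega), zero_mul]
  have hle := fun n => abs_le.1 (abs_sum_multichoose_le b d (i + 1) n)
  simp only [Nat.add_sub_add_right] at hle
  apply le_antisymm
  · have : 0 ≤ -b i := nonneg_of_multichoose (p := d - i) (N := N)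
      (B := ∑ j ∈ Finset.Ico (i + 1) (d + 1), |b j|) fun n hn => by
      linarith [key n hn, (hle n).1, (hle n).2]
    linarith
  · exact nonneg_of_multichoose (p := d - i) (N := N)
      (B := ∑ j ∈ Finset.Ico (i + 1) (d + 1), |b j|) fun n hn => by
      linarith [key n hn, (hle n).1, (hle n).2]

lemma eq_of_sum_multichoose_eq {b b' : ℕ → ℤ} {d N : ℕ}
    (h : ∀ n ≥ N, ∑ i ∈ Finset.range (d + 1), b i * ((d - i + 1).multichoose n : ℤ) =
      ∑ i ∈ Finset.range (d + 1), b' i * ((d - i + 1).multichoose n : ℤ)) :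
    ∀ i ≤ d, b i = b' i := fun i hi =>
  sub_eq_zero.1 <| eq_zero_of_sum_multichoose_eq_zero (b := b - b') (N := N) (fun n hn => by
    simp only [Pi.sub_apply, sub_mul, Finset.sum_sub_distrib, h n hn, sub_self]) i hi

end Numerics

section HilbertPolynomial

lemma sum_choose_eq_sum_multichoose (e : ℕ → ℤ) (d n : ℕ) :
    ∑ i ∈ Finset.range (d + 1), (-1) ^ i * e i * ((n + d - i).choose (d - i) : ℤ) =
      ∑ i ∈ Finset.range (d + 1), ((-1) ^ i * e i) * ((d - i + 1).multichoose n : ℤ) := by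
  refine Finset.sum_congr rfl fun i hi => ?_
  rw [Finset.mem_range] at hi
  rw [multichoose_succ_eq_choose, Nat.add_sub_assoc (by omega)]

lemma leading_coeff_eq {b : ℕ → ℤ} {d N r q : ℕ} {H : ℕ → ℕ}
    (hH : ∀ n ≥ N, (H n : ℤ) =
      ∑ i ∈ Finset.range (d + 1), b i * ((d - i + 1).multichoose n : ℤ))
    (hle : ∀ n, H n ≤ q * (d + 1).multichoose n)
    (hge : ∀ n, q * (d + 1).multichoose n ≤ H (n + r)) : b 0 = q := by
  have hsplit : ∀ n ≥ N, (H n : ℤ) = b 0 * (d + 1).multichoose n +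
      ∑ i ∈ Finset.Ico 1 (d + 1), b i * ((d - i + 1).multichoose n : ℤ) := by
    intro n hn
    rw [hH n hn, Finset.range_eq_Ico, Finset.sum_eq_sum_Ico_succ_bot (by omega)]
    simp
  have habs := fun n => abs_le.1 (abs_sum_multichoose_le b d 1 n)
  simp only [Nat.add_sub_cancel] at habs
  set B := ∑ i ∈ Finset.Ico 1 (d + 1), |b i|
  apply le_antisymm
  · have : 0 ≤ (q : ℤ) - b 0 := nonneg_of_multichoose (p := d) (N := N) (B := B) fun n hn => by
      have hle' : (H n : ℤ) ≤ q * (d + 1).multichoose n := by exact_mod_cast hle n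
      linarith [hsplit n hn, (habs n).1]
    linarith
  · have : 0 ≤ b 0 - q :=
        nonneg_of_multichoose (p := d) (N := N + r) (B := B + q * r) fun n hn => by
      obtain ⟨n, rfl⟩ := Nat.exists_eq_add_of_le' (show r ≤ n by omega)
      have hge' : (q * (d + 1).multichoose n : ℤ) ≤ H (n + r) := by exact_mod_cast hge n
      have hshift : (q * (d + 1).multichoose (n + r) : ℤ) ≤
          q * ((d + 1).multichoose n + r * d.multichoose (n + r)) := by
        exact_mod_cast Nat.mul_le_mul_left q (multichoose_add_le d n r)
      linarith [hsplit (n + r) (by omega), (habs (n + r)).2]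
    linarith

lemma exists_abs_sub_le {b : ℕ → ℤ} {p N q h : ℕ} {H : ℕ → ℕ}
    (hH : ∀ n ≥ N, (H n : ℤ) =
      ∑ i ∈ Finset.range (p + 1 + 1), b i * ((p + 1 - i + 1).multichoose n : ℤ))
    (h0 : b 0 = q) (h1 : b 1 = -(q - h + 1)) :
    ∃ B : ℤ, ∀ n ≥ N, |(q * (p + 1 + 1).multichoose n - (q - h) * (p + 1).multichoose n - H n) -
      ((p + 1).multichoose n : ℤ)| ≤ B * p.multichoose n := by
  refine ⟨∑ i ∈ Finset.Ico 2 (p + 1 + 1), |b i|, fun n hn => ?_⟩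
  have habs := abs_sum_multichoose_le b (p + 1) 2 n
  rw [show p + 1 + 1 - 2 = p by omega] at habs
  convert habs using 1
  rw [← abs_neg]
  congr 1
  rw [hH n hn, Finset.range_eq_Ico, Finset.sum_eq_sum_Ico_succ_bot (by omega),
    Finset.sum_eq_sum_Ico_succ_bot (by omega), h0, h1]
  simp only [Nat.sub_zero, Nat.add_sub_cancel, zero_add, Nat.reduceAdd]
  ring

lemma not_abs_sub_multichoose_le {p N : ℕ} {S : ℕ → ℤ} {B : ℤ}
    (hS : ∀ n ≥ N, |S n - ((p + 1).multichoose n : ℤ)| ≤ B * p.multichoose n)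
    (h : ∀ n, S n ≤ 0) : False := by
  have : (0 : ℤ) ≤ -1 := nonneg_of_multichoose (p := p) (N := N) (B := B) fun n hn => by
    linarith [(abs_le.1 (hS n hn)).1, h n]
  omega

lemma not_multichoose_add_multichoose_le {p N i : ℕ} {S : ℕ → ℤ} {B : ℤ}
    (hS : ∀ n ≥ N, |S n - ((p + 1).multichoose n : ℤ)| ≤ B * p.multichoose n)
    (h : ∀ k, ((p + 1).multichoose (k + i) + (p + 1).multichoose k : ℤ) ≤ S (k + i + 1)) :
    False := by
  have : (0 : ℤ) ≤ -1 := nonneg_of_multichoose (p := p) (N := N + i + 1) (B := B + i + 2)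
    fun n hn => by
      obtain ⟨k, rfl⟩ := Nat.exists_eq_add_of_le' (show i + 1 ≤ n by omega)
      have hstep := multichoose_add_le p (k + i) 1
      have hshift := multichoose_add_le p k (i + 1)
      zify at hstep hshift
      rw [← add_assoc] at hshift ⊢
      linarith [(abs_le.1 (hS _ (show k + i + 1 ≥ N by omega))).2, h k]
  omega

lemma hilbert_coefficients_eq {e : ℕ → ℤ} {d N c : ℕ} {q h : ℤ} {H : ℕ → ℕ} (hc : 0 < c)
    (hcd : c ≤ d)
    (hH : ∀ n ≥ N, (H n : ℤ) =
      ∑ i ∈ Finset.range (d + 1), ((-1) ^ i * e i) * ((d - i + 1).multichoose n : ℤ))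
    (hH' : ∀ n, (H n : ℤ) = q * (d + 1).multichoose n - h * d.multichoose n +
      (d - c).multichoose n) :
    (c < d → e (c + 1) = (-1) ^ (c + 1)) ∧ ∀ i, 2 ≤ i → i ≤ d → i ≠ c + 1 → e i = 0 := by
  let b : ℕ → ℤ := Pi.single 0 q + Pi.single 1 (-h) + Pi.single (c + 1) 1
  have hb : ∀ n ≥ 1, (H n : ℤ) =
      ∑ i ∈ Finset.range (d + 1), b i * ((d - i + 1).multichoose n : ℤ) := by
    intro n hn
    have hlast : (if c < d then ((d - (c + 1) + 1).multichoose n : ℤ) else 0) =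
        (d - c).multichoose n := by
      split_ifs with h
      · rw [show d - (c + 1) + 1 = d - c by omega]
      · obtain ⟨n, rfl⟩ := Nat.exists_eq_add_of_le' hn
        rw [Nat.sub_eq_zero_of_le (not_lt.1 h), Nat.multichoose_zero_succ, Nat.cast_zero]
    simp only [b, Pi.add_apply, Pi.single_apply, add_mul, ite_mul, zero_mul, one_mul,
      Finset.sum_add_distrib, Finset.sum_ite_eq', Finset.mem_range, Nat.add_lt_add_iff_right]
    rw [hlast, hH' n, if_pos d.succ_pos, if_pos (by omega), Nat.sub_zero,
      Nat.sub_add_cancel (by omega)]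
    ring
  have he : ∀ i ≤ d, e i = (-1) ^ i * b i := fun i hi => by
    have hcoeff := eq_of_sum_multichoose_eq (N := max N 1)
      (fun n hn => (hH n (le_of_max_le_left hn)).symm.trans (hb n (le_of_max_le_right hn))) i hi
    rw [← hcoeff, ← mul_assoc, ← mul_pow]
    simp
  refine ⟨fun h => ?_, fun i hi hid hic => ?_⟩
  · rw [he (c + 1) h]
    simp [b, hc.ne']
  · rw [he i hid]
    simp [b, show i ≠ 0 by omega, show i ≠ 1 by omega, hic]

end HilbertPolynomial

section HilbertFunction

variable {A : Type*} [CommRing A]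

lemma krullDim_submodule_eq_iff {R M : Type*} [Ring R] [AddCommGroup M] [Module R M] {n : ℕ} :
    Order.krullDim (Submodule R M) = ((n : ℕ∞) : WithBot ℕ∞) ↔ Module.length R M = n := by
  rw [← Module.coe_length, WithBot.coe_inj]

lemma length_quotient_anti {I J : Ideal A} (h : I ≤ J) :
    Module.length A (A ⧸ J) ≤ Module.length A (A ⧸ I) :=
  Module.length_le_of_surjective _ (Submodule.factor_surjective h)

lemma length_quotient_eq_length_subquotient_add {I J : Ideal A} (h : I ≤ J) :
    Module.length A (A ⧸ I) =
      Module.length A (↥J ⧸ Submodule.comap J.subtype I) + Module.length A (A ⧸ J) := by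
  rw [length_quotient_eq_length_quotient_comap_add J.subtype I, Submodule.range_subtype,
    sup_eq_right.2 h]

lemma pow_add_le_pow_of_pow_succ_eq {I Q : Ideal A} {r : ℕ} (hr : I ^ (r + 1) = Q * I ^ r)
    (n : ℕ) : I ^ (n + r) ≤ Q ^ n := by
  suffices h : I ^ (n + r) = Q ^ n * I ^ r from h.trans_le Ideal.mul_le_left
  induction n with
  | zero => simp
  | succ n ih =>
    calc I ^ (n + 1 + r) = I ^ n * I ^ (r + 1) := by ring
      _ = Q * I ^ (n + r) := by rw [hr]; ring
      _ = Q ^ (n + 1) * I ^ r := by rw [ih]; ring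

lemma radical_le_radical_of_pow_succ_eq {I Q : Ideal A} {r : ℕ} (hr : I ^ (r + 1) = Q * I ^ r) :
    I.radical ≤ Q.radical := by
  rw [← Ideal.radical_pow I r.succ_ne_zero]
  exact Ideal.radical_mono (hr.trans_le Ideal.mul_le_left)

namespace IsQuasiRegular

variable {ι : Type*} [Fintype ι] {a : ι → A} {I : Ideal A}

lemma exists_length_quotient_eq_coeff_zero (ha : IsQuasiRegular a)
    (hI : Ideal.span (Set.range a) ≤ I) {r : ℕ}
    (hred : I ^ (r + 1) = Ideal.span (Set.range a) * I ^ r) {H : ℕ → ℕ}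
    (hH : ∀ n, Module.length A (A ⧸ I ^ (n + 1)) = H n) {b : ℕ → ℤ} {N : ℕ}
    (hHS : ∀ n ≥ N, (H n : ℤ) = ∑ i ∈ Finset.range (Fintype.card ι + 1),
      b i * ((Fintype.card ι - i + 1).multichoose n : ℤ)) :
    ∃ q : ℕ, Module.length A (A ⧸ Ideal.span (Set.range a)) = q ∧ b 0 = q := by
  have hpow := pow_add_le_pow_of_pow_succ_eq hred
  obtain ⟨q, hq⟩ : ∃ q : ℕ, Module.length A (A ⧸ Ideal.span (Set.range a)) = q := by
    have hle := length_quotient_anti (hpow 1)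
    rw [add_comm, hH, pow_one] at hle
    exact (ENat.ne_top_iff_exists.1 (hle.trans_lt (ENat.natCast_lt_top _)).ne).imp
      fun _ h => h.symm
  have hlenQ : ∀ n, Module.length A (A ⧸ Ideal.span (Set.range a) ^ (n + 1)) =
      ((q * (Fintype.card ι + 1).multichoose n : ℕ) : ℕ∞) := fun n => by
    rw [ha.length_quotient_pow_succ, hq, mul_comm, Nat.cast_mul]
  refine ⟨q, hq, leading_coeff_eq (r := r) hHS (fun n => ?_) fun n => ?_⟩
  · have hle := length_quotient_anti (Ideal.pow_right_mono hI (n + 1))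
    rw [hH, hlenQ] at hle
    exact_mod_cast hle
  · have hle := length_quotient_anti (hpow (n + 1))
    rw [hlenQ, add_right_comm n 1 r, hH] at hle
    exact_mod_cast hle

lemma exists_length_quotient_mul_pow_eq (ha : IsQuasiRegular a)
    (hI : Ideal.span (Set.range a) ≤ I) {q h : ℕ}
    (hq : Module.length A (A ⧸ Ideal.span (Set.range a)) = q) (hh : Module.length A (A ⧸ I) = h)
    (n : ℕ) :
    ∃ k : ℕ, Module.length A (A ⧸ I * Ideal.span (Set.range a) ^ n) = k ∧
      (k : ℤ) = q * (Fintype.card ι + 1).multichoose n -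
        (q - h) * (Fintype.card ι).multichoose n := by
  have hlenI := ha.length_quotient_mul_pow hI n
  have hlenQ := ha.length_quotient_mul_pow le_rfl n
  rw [← pow_succ', ha.length_quotient_pow_succ, hq] at hlenQ
  obtain ⟨l, hl⟩ : ∃ l : ℕ, Module.length A (A ⧸ Ideal.span (Set.range a) ^ n) = l := by
    have hle := le_add_self.trans_eq hlenQ.symm
    rw [← Nat.cast_mul] at hle
    exact (ENat.ne_top_iff_exists.1 (hle.trans_lt (ENat.natCast_lt_top _)).ne).imp
      fun _ h => h.symm
  rw [hl] at hlenI hlenQ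
  refine ⟨(Fintype.card ι).multichoose n * h + l, by rw [hlenI, hh]; push_cast; rfl, ?_⟩
  have : ((Fintype.card ι + 1).multichoose n * q : ℤ) = (Fintype.card ι).multichoose n * q + l :=
    mod_cast hlenQ
  push_cast
  linear_combination -this

end IsQuasiRegular

section Growth

variable {I Q : Ideal A} {H K : ℕ → ℕ} {p N : ℕ} {B : ℤ}

lemma not_sq_le_mul_of_abs_sub_le (hQI : Q ≤ I)
    (hH : ∀ n, Module.length A (A ⧸ I ^ (n + 1)) = H n)
    (hK : ∀ n, Module.length A (A ⧸ I * Q ^ n) = K n)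
    (hB : ∀ n ≥ N, |(K n - H n : ℤ) - ((p + 1).multichoose n : ℤ)| ≤ B * p.multichoose n) :
    ¬ I ^ 2 ≤ I * Q := by
  refine fun h => not_abs_sub_multichoose_le hB fun n => ?_
  have hKH := hK n
  rw [← pow_succ_eq_mul_pow_of_sq_le hQI h, hH, Nat.cast_inj] at hKH
  rw [hKH, sub_self]

lemma exists_length_quotient_mul_pow_lt
    (hH : ∀ n, Module.length A (A ⧸ I ^ (n + 1)) = H n)
    (hK : ∀ n, Module.length A (A ⧸ I * Q ^ n) = K n)
    (hB : ∀ n ≥ N, |(K n - H n : ℤ) - ((p + 1).multichoose n : ℤ)| ≤ B * p.multichoose n)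
    (i : ℕ) :
    ∃ k, Module.length A (A ⧸ I * Q ^ (1 + k + i)) <
      (p + 1).multichoose (k + i) + ((p + 1).multichoose k +
        Module.length A (A ⧸ I ^ (k + i + 2))) := by
  by_contra! h
  refine not_multichoose_add_multichoose_le hB (i := i) fun k => ?_
  have hle := h k
  rw [hK, hH (k + i + 1), show 1 + k + i = k + i + 1 by ring] at hle
  norm_cast at hle
  zify at hle
  linarith

end Growth

lemma IsQuasiRegularParameters.hilbertFunction_eq [IsLocalRing A] [IsNoetherianRing A]
    {p : ℕ} {a : Fin (p + 1) → A} (ha : IsQuasiRegularParameters a) {rs : List A}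
    (hrs : ∀ r ∈ rs, r ∈ maximalIdeal A) (hreg : RingTheory.Sequence.IsRegular A rs)
    (hlen : rs.length = p + 1) {I : Ideal A} (hI : Ideal.span (Set.range a) ≤ I)
    (hIm : I ≤ maximalIdeal A) {r : ℕ} (hred : I ^ (r + 1) = Ideal.span (Set.range a) * I ^ r)
    {H : ℕ → ℕ} (hH : ∀ n, Module.length A (A ⧸ I ^ (n + 1)) = H n) {e : ℕ → ℤ} {N : ℕ}
    (hHS : ∀ n ≥ N, (H n : ℤ) = ∑ i ∈ Finset.range (p + 1 + 1),
      ((-1) ^ i * e i) * ((p + 1 - i + 1).multichoose n : ℤ))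
    (he : e 1 = e 0 - (H 0 : ℤ) + 1) {c : ℕ}
    (hc : Module.length A
      (↥(I ^ 2) ⧸ Submodule.comap (I ^ 2).subtype (I * Ideal.span (Set.range a))) = c) :
    0 < c ∧ c ≤ p + 1 ∧ ∀ n, (H n : ℤ) = e 0 * (p + 1 + 1).multichoose n -
      e 1 * (p + 1).multichoose n + (p + 1 - c).multichoose n := by
  have hH0 : Module.length A (A ⧸ I) = H 0 := by rw [← hH 0, zero_add, pow_one]
  obtain ⟨q, hq, h0⟩ := ha.isQuasiRegular.exists_length_quotient_eq_coeff_zero hI hred hH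
    (b := fun i => (-1) ^ i * e i) (by simpa only [Fintype.card_fin] using hHS)
  rw [pow_zero, one_mul] at h0
  choose K hK hKn using ha.isQuasiRegular.exists_length_quotient_mul_pow_eq hI hq hH0
  simp only [Fintype.card_fin] at hKn
  obtain ⟨B, hB⟩ := exists_abs_sub_le (q := q) (h := H 0) hHS (by simpa using h0)
    (by rw [he, h0, pow_one, neg_one_mul])
  simp only [← hKn] at hB
  obtain ⟨c', hc0, hcp, hc'⟩ := ha.exists_length_quotient_mul_pow hrs hreg (by simpa using hlen)
    hI hIm (not_sq_le_mul_of_abs_sub_le hI hH hK hB)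
    (by simpa only [Fintype.card_fin] using exists_length_quotient_mul_pow_lt hH hK hB)
  simp only [Fintype.card_fin, hK, hH (_ + 1)] at hcp hc'
  norm_cast at hc'
  have hK1 : K 1 = c + H 1 := by
    have hadd := length_quotient_eq_length_subquotient_add (by simpa using mul_pow_le_pow_succ hI 1)
    rw [hc, hH 1, ← pow_one (Ideal.span _), hK] at hadd
    exact_mod_cast hadd
  obtain rfl : c = c' := by
    have := hc' 0
    simp only [zero_add, Nat.multichoose_one_right] at this
    omega
  have hKH : ∀ n, K n + (p + 1 - c).multichoose n = H n + (p + 1).multichoose n := by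
    rintro (_ | n)
    · have hK0 := hK 0
      rw [pow_zero, mul_one, hH0, Nat.cast_inj] at hK0
      rw [hK0, Nat.multichoose_zero_right, Nat.multichoose_zero_right]
    · exact hc' n
  refine ⟨hc0, hcp, fun n => ?_⟩
  have hKHn : (K n + (p + 1 - c).multichoose n : ℤ) = H n + (p + 1).multichoose n :=
    mod_cast hKH n
  rw [he, h0]
  linear_combination hKn n - hKHn

end HilbertFunction

/-- The last term is `C(n+d-c-1, d-c-1)` if `c < d`; if `c = d` it is `1` for `n = 0` and `0` for
`n > 0`, so that only the value at `n = 0` differs from the Hilbert polynomial. -/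
theorem main_theorem_iii_general (A : Type*) [CommRing A] [IsLocalRing A] [IsNoetherianRing A]
    (d : ℕ) (hd : 0 < d) (hCM : IsCohenMacaulayLocal A d)
    (I Q : Ideal A) (hI : IsPrimaryToMax A I)
    (a : Fin d → A) (hQ : Q = Ideal.span (Set.range a)) (hQI : Q ≤ I)
    (hred : ∃ r : ℕ, I ^ (r + 1) = Q * I ^ r)
    (H : ℕ → ℕ)
    (hH : ∀ n : ℕ, moduleLength A (A ⧸ I ^ (n + 1)) = (H n : ℕ∞))
    (e : ℕ → ℤ) (N : ℕ)
    (hHS : ∀ n ≥ N, (H n : ℤ) =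
      ∑ i ∈ Finset.range (d + 1),
        (-1) ^ i * e i * ((n + d - i).choose (d - i) : ℤ))
    (he : e 1 = e 0 - (H 0 : ℤ) + 1)
    (c : ℕ)
    (hc : moduleLength A
      (↥(I ^ 2) ⧸ Submodule.comap (I ^ 2).subtype (Q * I)) = (c : ℕ∞)) :
    0 < c ∧ c ≤ d ∧
      (∀ n : ℕ, (H n : ℤ) =
        e 0 * ((n + d).choose d : ℤ) - e 1 * ((n + d - 1).choose (d - 1) : ℤ) +
          ((d - c).multichoose n : ℤ)) ∧
      (c < d → e (c + 1) = (-1) ^ (c + 1)) ∧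
      ∀ i : ℕ, 2 ≤ i → i ≤ d → i ≠ c + 1 → e i = 0 := by
  subst hQ
  obtain ⟨r, hred⟩ := hred
  obtain ⟨-, rs, hlen, hrs, hreg⟩ := hCM
  obtain ⟨p, rfl⟩ : ∃ p, d = p + 1 := Nat.exists_eq_add_of_le' hd
  have ha : IsQuasiRegularParameters a := .of_isRegular hrs hreg (by simpa using hlen)
    (fun i => hI.1 (hQI (Ideal.subset_span ⟨i, rfl⟩)))
    (hI.2.trans (radical_le_radical_of_pow_succ_eq hred))
  simp only [sum_choose_eq_sum_multichoose] at hHS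
  rw [mul_comm] at hc
  obtain ⟨hc0, hcd, hHn⟩ := ha.hilbertFunction_eq hrs hreg hlen hQI hI.1 hred
    (fun n => krullDim_submodule_eq_iff.1 (hH n)) hHS he (krullDim_submodule_eq_iff.1 hc)
  refine ⟨hc0, hcd, fun n => ?_, hilbert_coefficients_eq hc0 hcd hHS hHn⟩
  rw [hHn n, multichoose_succ_eq_choose, multichoose_succ_eq_choose]
  rfl

/-- Main theorem, assertion (iii): if `e₁ = e₀ - ℓ_A(A/I) + 1` and
`c = ℓ_A(I²/QI)`, then `0 < c ≤ d`, and if `c < d` then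
`ℓ_A(A/I^{n+1}) = e₀·C(n+d,d) - e₁·C(n+d-1,d-1) + C(n+d-c-1,d-c-1)` for all `n ≥ 0`;
consequently `e_{c+1} = (-1)^{c+1}` and `eᵢ = 0` for `2 ≤ i ≤ d`, `i ≠ c+1`.
Here `H n = ℓ_A(A/I^{n+1})` (so `H 0 = ℓ_A(A/I)`). -/
theorem main_theorem_iii (A : Type*) [CommRing A] [IsLocalRing A] [IsNoetherianRing A]
    [Infinite (ResidueField A)]
    (d : ℕ) (hd : 0 < d) (hCM : IsCohenMacaulayLocal A d)
    (I Q : Ideal A) (hI : IsPrimaryToMax A I)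
    (a : Fin d → A) (hQ : Q = Ideal.span (Set.range a)) (hQI : Q ≤ I)
    (hred : ∃ r : ℕ, I ^ (r + 1) = Q * I ^ r)
    (H : ℕ → ℕ)
    (hH : ∀ n : ℕ, moduleLength A (A ⧸ I ^ (n + 1)) = (H n : ℕ∞))
    (e : ℕ → ℤ) (N : ℕ)
    (hHS : ∀ n ≥ N, (H n : ℤ) =
      ∑ i ∈ Finset.range (d + 1),
        (-1) ^ i * e i * ((n + d - i).choose (d - i) : ℤ))
    (he : e 1 = e 0 - (H 0 : ℤ) + 1)
    (c : ℕ)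
    (hc : moduleLength A
      (↥(I ^ 2) ⧸ Submodule.comap (I ^ 2).subtype (Q * I)) = (c : ℕ∞)) :
    0 < c ∧ c ≤ d ∧
      (c < d →
        (∀ n : ℕ, (H n : ℤ) =
          e 0 * ((n + d).choose d : ℤ) - e 1 * ((n + d - 1).choose (d - 1) : ℤ) +
            ((n + d - c - 1).choose (d - c - 1) : ℤ)) ∧
        e (c + 1) = (-1) ^ (c + 1) ∧
        ∀ i : ℕ, 2 ≤ i → i ≤ d → i ≠ c + 1 → e i = 0) := by
  obtain ⟨hc0, hcd, hHn, hec, hei⟩ := main_theorem_iii_general A d hd hCM I Q hI a hQ hQI hred H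
    hH e N hHS he c hc
  refine ⟨hc0, hcd, fun h => ⟨fun n => ?_, hec h, hei⟩⟩
  rw [hHn n, multichoose_eq_choose_pred (Nat.sub_pos_of_lt h), ← Nat.add_sub_assoc hcd]
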